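/- arXiv:1907.11994 — 5 statements merged into one kernel-verified Lean document; each statement's English description precedes it below -/
import Mathlib

section
/- Fix an integer k ≥ 2. Suppose that there are infinitely many moduli q for which there exists a real Dirichlet character χ of conductor q and a real number 0 < δ_q ≤ (log q)^{−k} with L(1−δ_q, χ) = 0. Then limsup_{X→∞} G(X) / ((log X)·(log log X)^{k−1}) > 0; that is, there exist a constant C > 0 and an unbounded set of X with G(X) ≥ C·(log X)·(log log X)^{k−1}. -/
/-!
Write `r n = ∑ d ∣ n, χ d ≥ 0` and let `ℓ = lim ∑ χ n / n`. The hyperbola method gives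
`∑ n ≤ N, r n = ℓ N + O(q √N)` (`abs_sum_divisor_sums_sub_le`). A real zero `1 - δ` of `L(s, χ)` is a
zero of the continuation of `(s - 1) ∑ r n n⁻ˢ`, and this forces `ℓ` to be small:
`ℓ ≤ δ (∑ m ≤ z, r m / m + O(q / √z))` (`integral_error_eq_of_zero`, `residue_le_of_integral_error`).

On the other hand `r (m p) = 2 r m` for primes `p > m` with `χ p = 1`, so that many such primes would
make `∑ r n` large. Comparing the two estimates gives a scale `t` with `q ^ 12 ≤ t ≤ q ^ 16` at which
at most `O(t (log q)⁻ᵏ)` primes in `(q ^ 4, t]` satisfy `χ p = 1` (`few_split_primes`). By averaging, a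
reduced class `b` modulo `q` with `χ b = 1` contains only `O(t (log q)⁻ᵏ / φ(q))` of them
(`exists_sparse_class`).

Such a sparse class yields an efficient sieve of an interval `[1, y]` with `y ≈ t / q`
(`exists_covering`). Each prime `p ≤ √t` not dividing `q` removes the `n` with `p ∣ q n + b`; the
survivors correspond to primes `q n + b ≤ t`. Greedy choices for the primes dividing `q` reduce their
number to `O((t / q) (log q)⁻ᵏ)`, and the primes in `(√t, x]` with `x ≍ (t / q) (log q)¹⁻ᵏ` suffice to
remove these one at a time, by Chebyshev's bound. The Chinese remainder theorem turns the covering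
into a run of `y` composite numbers below `4 ^ (x + 1)` (`le_primeGap_of_covering`), and
`y ≫ x (log q) ^ (k - 1)`.
-/

/-- `primeGap X` is the largest gap `p' - p` between consecutive primes `p < p' ≤ X`. -/
noncomputable def primeGap (X : ℝ) : ℕ :=
  sSup {d : ℕ | ∃ p p' : ℕ, p.Prime ∧ p'.Prime ∧ p < p' ∧ (p' : ℝ) ≤ X ∧
    (∀ r : ℕ, p < r → r < p' → ¬ r.Prime) ∧ d = p' - p}

/-- Jacobsthal's function: the maximal gap between consecutive positive integers
having no prime factor `p ≤ u`. -/
noncomputable def jacobsthal (u : ℝ) : ℕ :=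
  sSup {d : ℕ | ∃ n n' : ℕ, 0 < n ∧ n < n' ∧
    (∀ p : ℕ, p.Prime → (p : ℝ) ≤ u → ¬ p ∣ n) ∧
    (∀ p : ℕ, p.Prime → (p : ℝ) ≤ u → ¬ p ∣ n') ∧
    (∀ m : ℕ, n < m → m < n' → ∃ p : ℕ, p.Prime ∧ (p : ℝ) ≤ u ∧ p ∣ m) ∧
    d = n' - n}

/-- `primesInAP x q b` is the number of primes `p ≤ x` with `p ≡ b (mod q)`. -/
noncomputable def primesInAP (x : ℝ) (q b : ℕ) : ℕ :=
  ((Finset.Icc 1 ⌊x⌋₊).filter (fun p => p.Prime ∧ p % q = b % q)).card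

/-- `leastPrime q b` is the least prime `p` with `p ≡ b (mod q)`. -/
noncomputable def leastPrime (q b : ℕ) : ℕ :=
  sInf {p : ℕ | p.Prime ∧ p % q = b % q}

section Helpers

open Finset MeasureTheory Asymptotics Filter

/-! ### Summatory function of `1 * χ` -/

/-- If the partial sums of `c` are bounded by `Q`, then `∑ c i / i` converges with error
`2 * Q / (n + 1)`, by partial summation. For `c = χ` the limit `ℓ` is `L(1, χ)`; only the rate of
convergence matters below. -/
theorem exists_harmonic_limit (c : ℕ → ℝ) (Q : ℝ)
    (hS : ∀ n, |∑ i ∈ Icc 1 n, c i| ≤ Q) :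
    ∃ ℓ : ℝ, ∀ n : ℕ, |∑ i ∈ Icc 1 n, c i / i - ℓ| ≤ 2 * Q / (n + 1) := by
  set S : ℕ → ℝ := fun n => ∑ i ∈ Icc 1 n, c i with hSdef
  set f : ℕ → ℝ := fun n => ∑ i ∈ Icc 1 n, c i / i with hf
  -- `g` is the sum after partial summation; `g - Q / (n + 1)` increases, `g + Q / (n + 1)` decreases
  set g : ℕ → ℝ := fun n => f n - S n / (n + 1) with hg
  have step : ∀ n, g (n + 1) - g n = S (n + 1) * (1 / ((n : ℝ) + 1) - 1 / ((n : ℝ) + 1 + 1)) := by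
    intro n
    have h1 : S (n + 1) = S n + c (n + 1) := by
      simp only [hSdef]; rw [sum_Icc_succ_top (by omega)]
    have h2 : f (n + 1) = f n + c (n + 1) / ((n : ℝ) + 1) := by
      simp only [hf]; rw [sum_Icc_succ_top (by omega)]; push_cast; rfl
    simp only [hg]
    rw [h2, h1]
    push_cast
    have : (n : ℝ) + 1 ≠ 0 := by positivity
    have : (n : ℝ) + 1 + 1 ≠ 0 := by positivity
    field_simp
    ring
  have hd : ∀ n : ℕ, 0 ≤ 1 / ((n : ℝ) + 1) - 1 / ((n : ℝ) + 1 + 1) := by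
    intro n
    rw [sub_nonneg]
    apply one_div_le_one_div_of_le <;> first | positivity | linarith
  have hlow : Monotone (fun n : ℕ => g n - Q * (1 / ((n : ℝ) + 1))) := by
    apply monotone_nat_of_le_succ
    intro n
    have h1 := step n
    have h2 := abs_le.1 (hS (n + 1))
    have := mul_le_mul_of_nonneg_right h2.1 (hd n)
    push_cast
    linarith
  have hup : Antitone (fun n : ℕ => g n + Q * (1 / ((n : ℝ) + 1))) := by
    apply antitone_nat_of_succ_le
    intro n
    have h1 := step n
    have h2 := abs_le.1 (hS (n + 1))
    have := mul_le_mul_of_nonneg_right h2.2 (hd n)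
    push_cast
    linarith
  have hQ : 0 ≤ Q := (abs_nonneg _).trans (hS 0)
  have hcmp : ∀ m n : ℕ, g m - Q * (1 / ((m : ℝ) + 1)) ≤ g n + Q * (1 / ((n : ℝ) + 1)) := by
    intro m n
    have a := hlow (le_max_left m n)
    have b := hup (le_max_right m n)
    have : 0 ≤ Q * (1 / (((max m n : ℕ) : ℝ) + 1)) := by positivity
    simp only at a b
    linarith
  refine ⟨⨆ m : ℕ, (g m - Q * (1 / ((m : ℝ) + 1))), fun n => ?_⟩
  have hb : BddAbove (Set.range fun m : ℕ => (g m - Q * (1 / ((m : ℝ) + 1)))) :=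
    ⟨_, by rintro _ ⟨m, rfl⟩; exact hcmp m 0⟩
  have h1 := le_ciSup hb n
  have h2 : (⨆ m : ℕ, (g m - Q * (1 / ((m : ℝ) + 1)))) ≤ g n + Q * (1 / ((n : ℝ) + 1)) :=
    ciSup_le fun m => hcmp m n
  have h3 := abs_le.1 (hS n)
  have hn : (0 : ℝ) < (n : ℝ) + 1 := by positivity
  have h4 : S n / ((n : ℝ) + 1) ≤ Q * (1 / ((n : ℝ) + 1)) := by
    rw [mul_one_div]; gcongr; exact h3.2
  have h5 : -(Q * (1 / ((n : ℝ) + 1))) ≤ S n / ((n : ℝ) + 1) := by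
    rw [mul_one_div, ← neg_div]; gcongr; exact h3.1
  have h6 : 2 * Q / ((n : ℝ) + 1) = Q * (1 / ((n : ℝ) + 1)) + Q * (1 / ((n : ℝ) + 1)) := by ring
  rw [h6, abs_le]
  simp only [hg] at h1 h2
  simp only [hf] at *
  constructor <;> linarith

theorem sum_divisor_sums (c : ℕ → ℝ) (N : ℕ) :
    ∑ n ∈ Icc 1 N, ∑ d ∈ n.divisors, c d = ∑ d ∈ Icc 1 N, c d * ((N / d : ℕ) : ℝ) := by
  have h : ∀ n ∈ Icc 1 N, ∑ d ∈ n.divisors, c d = ∑ d ∈ Icc 1 N, if d ∣ n then c d else 0 := by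
    intro n hn
    rw [← sum_filter]
    apply sum_congr _ (fun _ _ => rfl)
    ext d
    simp only [mem_Icc] at hn
    simp only [Nat.mem_divisors, mem_filter, mem_Icc]
    constructor
    · rintro ⟨h1, h2⟩
      have := Nat.le_of_dvd (by omega) h1
      have := Nat.pos_of_dvd_of_pos h1 (by omega)
      exact ⟨⟨by omega, by omega⟩, h1⟩
    · rintro ⟨h1, h2⟩
      exact ⟨h2, by omega⟩
  rw [sum_congr rfl h, sum_comm]
  apply sum_congr rfl
  intro d hd
  rw [← sum_filter, sum_const, nsmul_eq_mul, mul_comm]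
  congr 2
  have := Nat.Ioc_filter_dvd_card_eq_div N d
  rw [← this]
  rfl

/-- Dirichlet's hyperbola method: the summatory function of `1 * c` is `ℓ * N + O(Q √N)`. -/
theorem abs_sum_divisor_sums_sub_le (c : ℕ → ℝ) (Q ℓ : ℝ) (hQ : 1 ≤ Q)
    (hc : ∀ n, |c n| ≤ 1)
    (hS : ∀ n, |∑ i ∈ Icc 1 n, c i| ≤ Q)
    (hℓ : ∀ n : ℕ, |∑ i ∈ Icc 1 n, c i / i - ℓ| ≤ 2 * Q / (n + 1)) (N : ℕ) (hN : 1 ≤ N) :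
    |∑ n ∈ Icc 1 N, ∑ d ∈ n.divisors, c d - ℓ * N| ≤ 7 * Q * √N := by
  rw [sum_divisor_sums]
  set D := Nat.sqrt N with hD
  have hDN : D ≤ N := Nat.sqrt_le_self N
  have hD1 : N < (D + 1) * (D + 1) := Nat.lt_succ_sqrt N
  have hD1' : (N : ℝ) ≤ ((D : ℝ) + 1) * (D + 1) := by exact_mod_cast hD1.le
  have hDsq : (D : ℝ) ≤ √N := Real.nat_sqrt_le_real_sqrt
  have hsq1 : 1 ≤ √(N : ℝ) := by
    rw [Real.one_le_sqrt]; exact_mod_cast hN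
  have hsqN : √(N : ℝ) * √(N : ℝ) = N := Real.mul_self_sqrt (by positivity)
  have hDsq1 : √(N : ℝ) ≤ D + 1 := Real.sqrt_le_iff.2 ⟨by positivity, by nlinarith⟩
  have hsplit : Icc 1 N = Icc 1 D ∪ Ioc D N := by
    ext x; simp only [mem_union, mem_Icc, mem_Ioc]; omega
  have hdisj : Disjoint (Icc 1 D) (Ioc D N) := by
    rw [disjoint_left]; intro x; simp only [mem_Icc, mem_Ioc]; omega
  rw [hsplit, sum_union hdisj]
  -- for `d ≤ √N`, replacing `⌊N / d⌋` by `N / d` costs at most `1` per term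
  have h1 : |∑ d ∈ Icc 1 D, c d * ((N / d : ℕ) : ℝ) - N * ∑ d ∈ Icc 1 D, c d / d| ≤ D := by
    rw [mul_sum, ← sum_sub_distrib]
    refine (abs_sum_le_sum_abs _ _).trans ?_
    have : ∀ d ∈ Icc 1 D, |c d * ((N / d : ℕ) : ℝ) - N * (c d / d)| ≤ 1 := by
      intro d hd
      have hd0 : (0 : ℝ) < d := by
        have := (mem_Icc.1 hd).1
        exact_mod_cast this
      have e : c d * ((N / d : ℕ) : ℝ) - N * (c d / d) = c d * (((N / d : ℕ) : ℝ) - N / d) := by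
        field_simp
      rw [e, abs_mul]
      have a1 : ((N / d : ℕ) : ℝ) ≤ N / d := Nat.cast_div_le
      have a2 : (N : ℝ) / d < ((N / d : ℕ) : ℝ) + 1 := by
        rw [div_lt_iff₀ hd0]
        have := Nat.lt_mul_div_succ N (show 0 < d by exact_mod_cast hd0)
        have : (N : ℝ) < d * ((N / d : ℕ) + 1) := by exact_mod_cast this
        linarith
      have a3 : |((N / d : ℕ) : ℝ) - N / d| ≤ 1 := by rw [abs_le]; constructor <;> linarith
      calc |c d| * _ ≤ 1 * 1 := mul_le_mul (hc d) a3 (abs_nonneg _) (by norm_num)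
        _ = 1 := by norm_num
    refine (sum_le_sum this).trans ?_
    simp
  -- for `d > √N`, write `⌊N / d⌋` as the number of
  -- `e ≤ √N + 1` with `d ≤ N / e` and swap the sums
  have h2 : |∑ d ∈ Ioc D N, c d * ((N / d : ℕ) : ℝ)| ≤ (D + 1) * (2 * Q) := by
    have e1 : ∀ d ∈ Ioc D N, c d * ((N / d : ℕ) : ℝ) =
        ∑ e ∈ Icc 1 (D + 1), if d ≤ N / e then c d else 0 := by
      intro d hd
      rw [mem_Ioc] at hd
      rw [← sum_filter, sum_const, nsmul_eq_mul, mul_comm]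
      congr 2
      have : {e ∈ Icc 1 (D + 1) | d ≤ N / e} = Icc 1 (N / d) := by
        ext e
        simp only [mem_filter, mem_Icc]
        constructor
        · rintro ⟨⟨h1, h2⟩, h3⟩
          refine ⟨h1, ?_⟩
          rw [Nat.le_div_iff_mul_le (by omega)] at h3 ⊢
          rwa [mul_comm]
        · rintro ⟨h1, h2⟩
          rw [Nat.le_div_iff_mul_le (by omega)] at h2
          refine ⟨⟨h1, ?_⟩, ?_⟩
          · by_contra hcon
            push Not at hcon
            have : (D + 1) * (D + 1) ≤ e * d := Nat.mul_le_mul (by omega) (by omega)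
            omega
          · rw [Nat.le_div_iff_mul_le (by omega)]
            rwa [mul_comm]
      rw [this]; simp
    rw [sum_congr rfl e1, sum_comm]
    refine (abs_sum_le_sum_abs _ _).trans ?_
    have : ∀ e ∈ Icc 1 (D + 1), |∑ d ∈ Ioc D N, if d ≤ N / e then c d else 0| ≤ 2 * Q := by
      intro e he
      rw [← sum_filter]
      have hset : {d ∈ Ioc D N | d ≤ N / e} = Ioc D (N / e) := by
        ext d
        have := Nat.div_le_self N e
        simp only [mem_filter, mem_Ioc]
        omega
      rw [hset]
      rcases le_total D (N / e) with hle | hle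
      · have : ∑ d ∈ Ioc D (N / e), c d = ∑ i ∈ Icc 1 (N / e), c i - ∑ i ∈ Icc 1 D, c i := by
          have : Icc 1 (N / e) = Icc 1 D ∪ Ioc D (N / e) := by
            ext x; simp only [mem_union, mem_Icc, mem_Ioc]; omega
          rw [this, sum_union]
          · ring
          · rw [disjoint_left]; intro x; simp only [mem_Icc, mem_Ioc]; omega
        rw [this]
        have a1 := abs_le.1 (hS (N / e))
        have a2 := abs_le.1 (hS D)
        rw [abs_le]; constructor <;> linarith
      · rw [Ioc_eq_empty (by omega)]; simp; linarith
    refine (sum_le_sum this).trans ?_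
    simp
  have h3 : |N * ∑ d ∈ Icc 1 D, c d / d - ℓ * N| ≤ 2 * Q * √N := by
    have e : N * ∑ d ∈ Icc 1 D, c d / d - ℓ * N = N * (∑ d ∈ Icc 1 D, c d / d - ℓ) := by ring
    rw [e, abs_mul, abs_of_nonneg (by positivity : (0 : ℝ) ≤ N)]
    calc (N : ℝ) * |∑ d ∈ Icc 1 D, c d / d - ℓ| ≤ N * (2 * Q / (D + 1)) := by
          gcongr; exact hℓ D
      _ ≤ N * (2 * Q / √N) := by gcongr
      _ = 2 * Q * √N := by
          field_simp
          nlinarith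
  have h4 : (D : ℝ) + (D + 1) * (2 * Q) + 2 * Q * √N ≤ 7 * Q * √N := by
    nlinarith
  have := abs_le.1 h1
  have := abs_le.1 h2
  have := abs_le.1 h3
  rw [abs_le]; constructor <;> linarith

/-! ### Consequences of a real zero -/

/-- For a real character, `ζ * χ` is the real divisor sum `r n = ∑ d ∣ n, χ d`. -/
theorem zetaMul_eq_ofReal {q : ℕ} (χ : DirichletCharacter ℂ q)
    (hre : ∀ a : ZMod q, (χ a).im = 0) (n : ℕ) :
    χ.zetaMul n = ((∑ d ∈ n.divisors, (χ (d : ZMod q)).re : ℝ) : ℂ) := by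
  rw [DirichletCharacter.zetaMul, ArithmeticFunction.coe_zeta_mul_apply]
  push_cast
  apply sum_congr rfl
  intro d hd
  have hd0 : d ≠ 0 := (Nat.pos_of_mem_divisors hd).ne'
  simp only [toArithmeticFunction, ArithmeticFunction.coe_mk, hd0, if_false]
  apply Complex.ext <;> simp [hre]

theorem LSeries_zetaMul {q : ℕ} [NeZero q] (χ : DirichletCharacter ℂ q) {s : ℂ} (hs : 1 < s.re) :
    LSeries χ.zetaMul s = riemannZeta s * χ.LFunction s := by
  rw [DirichletCharacter.zetaMul, ← ArithmeticFunction.coe_mul, LSeries_convolution']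
  · rw [χ.LFunction_eq_LSeries hs]
    congr 1
    · simp_rw [← ArithmeticFunction.LSeries_zeta_eq_riemannZeta hs,
        ← ArithmeticFunction.natCoe_apply]
    · exact (LSeries_congr χ.apply_eq_toArithmeticFunction_apply s).symm
  · exact ArithmeticFunction.LSeriesSummable_zeta_iff.mpr hs
  · exact (LSeriesSummable_congr _ fun h ↦ (χ.apply_eq_toArithmeticFunction_apply h).symm).mpr <|
      ZMod.LSeriesSummable_of_one_lt_re χ hs

/-- Let `r ≥ 0` have summatory function `A u = ℓ u + O(√u)`, and suppose that `(s - 1) ∑ r n n⁻ˢ`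
extends to an entire function `Φ`. Partial summation gives
`Φ s = s ℓ + s (s - 1) ∫₁^∞ (A u - ℓ u) u⁻ˢ⁻¹ du` for `1 < re s`, and by the identity theorem this
persists for `1/2 < re s`. Evaluating at a zero `1 - δ` of `Φ` expresses the integral as `ℓ / δ`. -/
theorem integral_error_eq_of_zero (r : ℕ → ℝ) (K ℓ : ℝ) (hr : ∀ n, 0 ≤ r n)
    (hA : ∀ u : ℝ, 1 ≤ u → |∑ n ∈ Icc 1 ⌊u⌋₊, r n - ℓ * u| ≤ K * √u)
    (Φ : ℂ → ℂ) (hΦ : Differentiable ℂ Φ)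
    (hΦL : ∀ s : ℂ, 1 < s.re → (s - 1) * LSeries (fun n => (r n : ℂ)) s = Φ s)
    (δ : ℝ) (h0 : 0 < δ) (h1 : δ < 1 / 2) (hz : Φ (1 - δ) = 0) :
    IntegrableOn (fun u : ℝ => (∑ n ∈ Icc 1 ⌊u⌋₊, r n - ℓ * u) * u ^ (δ - 2)) (Set.Ioi 1) ∧
    ∫ u in Set.Ioi (1 : ℝ), (∑ n ∈ Icc 1 ⌊u⌋₊, r n - ℓ * u) * u ^ (δ - 2) = ℓ / δ := by
  set E : ℝ → ℝ := fun u => ∑ n ∈ Icc 1 ⌊u⌋₊, r n - ℓ * u with hE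
  have hK : 0 ≤ K := by
    have := (abs_nonneg _).trans (hA 1 le_rfl)
    simpa using this
  have hmeasA : Measurable (fun u : ℝ => ∑ n ∈ Icc 1 ⌊u⌋₊, r n) :=
    (measurable_of_countable (fun m : ℕ => ∑ n ∈ Icc 1 m, r n)).comp Nat.measurable_floor
  have hmeas : Measurable E := hmeasA.sub (measurable_const.mul measurable_id)
  have hmeasC : Measurable (fun u => (E u : ℂ)) := Complex.measurable_ofReal.comp hmeas
  -- the integral is the Mellin transform of `f`, which is holomorphic for `1/2 < re s`
  set f : ℝ → ℂ := Set.indicator (Set.Ioi 1) (fun u => (E u : ℂ)) with hf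
  have hfm : Measurable f := hmeasC.indicator measurableSet_Ioi
  have hfb : ∀ u, ‖f u‖ ≤ K * √u := by
    intro u
    by_cases hu : u ∈ Set.Ioi (1 : ℝ)
    · rw [hf, Set.indicator_of_mem hu, Complex.norm_real]
      exact hA u (le_of_lt hu)
    · rw [hf, Set.indicator_of_notMem hu]; simp; positivity
  have hloc : LocallyIntegrableOn f (Set.Ioi 0) := by
    have hg : LocallyIntegrable (fun u : ℝ => K * √u) :=
      (continuous_const.mul Real.continuous_sqrt).locallyIntegrable
    have : LocallyIntegrable f := hg.mono hfm.aestronglyMeasurable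
      (Eventually.of_forall fun u => (hfb u).trans (le_abs_self _))
    exact this.locallyIntegrableOn _
  have htop : f =O[atTop] (fun x : ℝ => x ^ (-(-(1 / 2) : ℝ))) := by
    refine IsBigO.of_bound K ?_
    filter_upwards [eventually_ge_atTop 0] with u hu
    have : u ^ (-(-(1 / 2) : ℝ)) = √u := by rw [neg_neg, Real.sqrt_eq_rpow]
    rw [this, Real.norm_of_nonneg (Real.sqrt_nonneg _)]
    exact hfb u
  have hbot : ∀ b : ℝ, f =O[nhdsWithin 0 (Set.Ioi 0)] (fun x : ℝ => x ^ (-b)) := by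
    intro b
    refine IsBigO.of_bound 0 ?_
    have : Set.Iio (1 : ℝ) ∈ nhdsWithin (0 : ℝ) (Set.Ioi 0) :=
      mem_nhdsWithin_of_mem_nhds (Iio_mem_nhds one_pos)
    filter_upwards [this] with u hu
    have hu' : u ∉ Set.Ioi (1 : ℝ) := fun h => lt_asymm (Set.mem_Iio.1 hu) (Set.mem_Ioi.1 h)
    rw [hf, Set.indicator_of_notMem hu']; simp
  have hdiff : ∀ s : ℂ, 1 / 2 < s.re → DifferentiableAt ℂ (fun s => mellin f (-s)) s := by
    intro s hs
    have : DifferentiableAt ℂ (mellin f) (-s) :=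
      mellin_differentiableAt_of_isBigO_rpow (b := -s.re - 1) hloc htop (by simp; linarith)
        (hbot _) (by simp)
    exact this.comp s differentiableAt_id.neg
  have hmel : ∀ s : ℂ, mellin f (-s) = ∫ t in Set.Ioi (1 : ℝ), (E t : ℂ) * (t : ℂ) ^ (-(s + 1)) := by
    intro s
    rw [mellin]
    have : ∀ t : ℝ, (t : ℂ) ^ (-s - 1) • f t =
        Set.indicator (Set.Ioi 1) (fun u : ℝ => (E u : ℂ) * (u : ℂ) ^ (-(s + 1))) t := by
      intro t
      by_cases ht : t ∈ Set.Ioi (1 : ℝ)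
      · rw [hf, Set.indicator_of_mem ht, Set.indicator_of_mem ht, smul_eq_mul, mul_comm]
        congr 2; ring
      · rw [hf, Set.indicator_of_notMem ht, Set.indicator_of_notMem ht, smul_zero]
    simp_rw [this]
    rw [setIntegral_indicator measurableSet_Ioi]
    congr 2
    ext x; simp only [Set.mem_inter_iff, Set.mem_Ioi]
    constructor
    · exact fun h => h.2
    · exact fun h => ⟨by linarith, h⟩
  have herr : ∀ s : ℂ, 1 / 2 < s.re →
      IntegrableOn (fun t : ℝ => (E t : ℂ) * (t : ℂ) ^ (-(s + 1))) (Set.Ioi 1) := by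
    intro s hs
    have hi : IntegrableOn (fun t : ℝ => K * t ^ (1 / 2 + (-(s.re + 1)))) (Set.Ioi 1) :=
      (integrableOn_Ioi_rpow_of_lt (by linarith) one_pos).const_mul K
    refine Integrable.mono' hi ?_ ?_
    · refine hmeasC.aestronglyMeasurable.mul ?_
      refine ContinuousOn.aestronglyMeasurable (fun t ht ↦ ?_) measurableSet_Ioi
      exact (Complex.continuousAt_ofReal_cpow_const _ _
        (Or.inr (one_pos.trans ht).ne')).continuousWithinAt
    · refine (ae_restrict_iff' measurableSet_Ioi).mpr (Eventually.of_forall fun t ht => ?_)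
      have ht0 : 0 < t := one_pos.trans ht
      rw [norm_mul, Complex.norm_cpow_eq_rpow_re_of_pos ht0, Complex.norm_real,
        Real.rpow_add ht0, ← Real.sqrt_eq_rpow, ← mul_assoc]
      have e : (-(s + 1)).re = -(s.re + 1) := by simp
      rw [e]
      exact mul_le_mul_of_nonneg_right (hA t (le_of_lt ht)) (by positivity)
  have hid : ∀ s : ℂ, 1 < s.re → Φ s = s * ℓ + s * (s - 1) * mellin f (-s) := by
    intro s hs
    have hO : (fun n : ℕ ↦ ∑ k ∈ Icc 1 n, r k) =O[atTop] fun n ↦ (n : ℝ) ^ (1 : ℝ) := by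
      refine IsBigO.of_bound (K + |ℓ|) ?_
      filter_upwards [eventually_ge_atTop 1] with n hn
      have hn' : (1 : ℝ) ≤ n := by exact_mod_cast hn
      have h := hA n hn'
      rw [Nat.floor_natCast] at h
      have hsq : √(n : ℝ) ≤ n := Real.sqrt_le_iff.2 ⟨by positivity, by nlinarith⟩
      rw [Real.rpow_one, Real.norm_eq_abs, Real.norm_of_nonneg (by positivity : (0 : ℝ) ≤ n)]
      have h2 : |∑ k ∈ Icc 1 n, r k| ≤ |∑ k ∈ Icc 1 n, r k - ℓ * n| + |ℓ * n| := by
        have := abs_add_le (∑ k ∈ Icc 1 n, r k - ℓ * n) (ℓ * n)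
        simpa using this
      rw [abs_mul, abs_of_nonneg (by positivity : (0 : ℝ) ≤ n)] at h2
      nlinarith
    have hL := LSeries_eq_mul_integral_of_nonneg r zero_le_one hs hO hr
    have hsplit : ∫ t in Set.Ioi (1 : ℝ), (∑ k ∈ Icc 1 ⌊t⌋₊, (r k : ℂ)) * (t : ℂ) ^ (-(s + 1)) =
        mellin f (-s) + ℓ * (1 / (s - 1)) := by
      rw [hmel]
      have hs0 : s - 1 ≠ 0 := by
        intro h
        have := congrArg Complex.re h
        simp at this; linarith
      have hpow : ∫ t in Set.Ioi (1 : ℝ), (t : ℂ) ^ (-s) = 1 / (s - 1) := by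
        rw [integral_Ioi_cpow_of_lt (by simpa using hs) one_pos]
        have : -s + 1 = -(s - 1) := by ring
        rw [this, neg_div_neg_eq, Complex.ofReal_one, Complex.one_cpow]
      rw [← hpow, ← integral_const_mul, ← integral_add (herr s (by linarith))
        ((integrableOn_Ioi_cpow_of_lt (by simpa using hs) one_pos).const_mul _)]
      refine setIntegral_congr_fun measurableSet_Ioi fun t ht => ?_
      have ht0 : (t : ℂ) ≠ 0 := by exact_mod_cast (one_pos.trans ht).ne'
      have : (t : ℂ) ^ (-s) = t * (t : ℂ) ^ (-(s + 1)) := by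
        rw [show -s = 1 + -(s + 1) by ring, Complex.cpow_add _ _ ht0, Complex.cpow_one]
      simp only [hE]
      rw [this]; push_cast; ring
    rw [← hΦL s hs, hL, hsplit]
    have hs0 : s - 1 ≠ 0 := by
      intro h
      have := congrArg Complex.re h
      simp at this; linarith
    field_simp
    ring
  -- analytic continuation to `1/2 < re s`
  have hext : Set.EqOn Φ (fun s => s * ℓ + s * (s - 1) * mellin f (-s)) {s : ℂ | 1 / 2 < s.re} := by
    have hopen : IsOpen {s : ℂ | 1 / 2 < s.re} := isOpen_lt continuous_const Complex.continuous_re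
    have hconv : Convex ℝ {s : ℂ | 1 / 2 < s.re} := convex_halfSpace_re_gt _
    refine AnalyticOnNhd.eqOn_of_preconnected_of_eventuallyEq (𝕜 := ℂ) (z₀ := 2) ?_ ?_ hconv.isPreconnected
      (by simp; norm_num) ?_
    · exact hΦ.differentiableOn.analyticOnNhd hopen
    · refine DifferentiableOn.analyticOnNhd (fun s hs => ?_) hopen
      have := hdiff s hs
      refine DifferentiableAt.differentiableWithinAt ?_
      fun_prop
    · have : {s : ℂ | 1 < s.re} ∈ nhds (2 : ℂ) :=
        (isOpen_lt continuous_const Complex.continuous_re).mem_nhds (by simp)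
      filter_upwards [this] with s hs using hid s hs
  have hre : 1 / 2 < (1 - (δ : ℂ)).re := by simp; linarith
  have hreal : ∀ t ∈ Set.Ioi (1 : ℝ), (E t : ℂ) * (t : ℂ) ^ (-((1 - (δ : ℂ)) + 1)) =
      ((E t * t ^ (δ - 2) : ℝ) : ℂ) := by
    intro t ht
    have ht0 : 0 ≤ t := (one_pos.trans ht).le
    push_cast
    rw [Complex.ofReal_cpow ht0]
    congr 2
    push_cast; ring
  constructor
  · have := (herr _ hre).congr_fun hreal measurableSet_Ioi
    exact this.re
  · have h2 := hext hre
    rw [hz] at h2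
    simp only at h2
    have hm : mellin f (-(1 - (δ : ℂ))) =
        ((∫ u in Set.Ioi (1 : ℝ), E u * u ^ (δ - 2) : ℝ) : ℂ) := by
      rw [hmel, setIntegral_congr_fun measurableSet_Ioi hreal]
      exact integral_complex_ofReal
    rw [hm] at h2
    have h3 : (0 : ℝ) = (1 - δ) * ℓ + (1 - δ) * ((1 - δ) - 1) *
        ∫ u in Set.Ioi (1 : ℝ), E u * u ^ (δ - 2) := by exact_mod_cast h2
    have h4 : (1 - δ) * (ℓ - δ * ∫ u in Set.Ioi (1 : ℝ), E u * u ^ (δ - 2)) = 0 := by linarith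
    rcases mul_eq_zero.1 h4 with h | h
    · linarith
    · rw [eq_div_iff h0.ne']; linarith

/-- The integral identity bounds `ℓ` by `δ` times a partial sum of `∑ r m / m`: the integral is split
at `z`, the tail is estimated by the `O(√u)` bound, and `A u` is integrated term by term on
`[1, z]`. -/
theorem residue_le_of_integral_error (r : ℕ → ℝ) (K ℓ : ℝ) (hr : ∀ n, 0 ≤ r n)
    (hA : ∀ u : ℝ, 1 ≤ u → |∑ n ∈ Icc 1 ⌊u⌋₊, r n - ℓ * u| ≤ K * √u)
    (δ : ℝ) (h0 : 0 < δ) (h1 : δ ≤ 1 / 4)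
    (herr : IntegrableOn (fun u : ℝ => (∑ n ∈ Icc 1 ⌊u⌋₊, r n - ℓ * u) * u ^ (δ - 2)) (Set.Ioi 1))
    (heq : ∫ u in Set.Ioi (1 : ℝ), (∑ n ∈ Icc 1 ⌊u⌋₊, r n - ℓ * u) * u ^ (δ - 2) = ℓ / δ)
    (z : ℕ) (hz : 1 ≤ z) :
    ℓ ≤ δ * (∑ m ∈ Icc 1 z, r m / m + 4 * K / √z) := by
  have hK : 0 ≤ K := by
    have := (abs_nonneg _).trans (hA 1 le_rfl)
    simpa using this
  have hz1 : (1 : ℝ) ≤ z := by exact_mod_cast hz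
  have hz0 : (0 : ℝ) < z := by linarith
  set E : ℝ → ℝ := fun u => ∑ n ∈ Icc 1 ⌊u⌋₊, r n - ℓ * u with hE
  have hsub1 : Set.Ioc (1 : ℝ) z ⊆ Set.Ioi 1 := fun x hx => hx.1
  have hsub2 : Set.Ioi (z : ℝ) ⊆ Set.Ioi 1 := Set.Ioi_subset_Ioi hz1
  have hsplit : ∫ u in Set.Ioi (1 : ℝ), E u * u ^ (δ - 2) =
      (∫ u in Set.Ioc (1 : ℝ) z, E u * u ^ (δ - 2)) + ∫ u in Set.Ioi (z : ℝ), E u * u ^ (δ - 2) := by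
    rw [← Set.Ioc_union_Ioi_eq_Ioi hz1]
    refine setIntegral_union ?_ measurableSet_Ioi (herr.mono_set hsub1) (herr.mono_set hsub2)
    exact Set.disjoint_left.2 fun x hx hx' => not_lt.2 hx.2 hx'
  have htail : ∫ u in Set.Ioi (z : ℝ), E u * u ^ (δ - 2) ≤ 4 * K * (z : ℝ) ^ (δ - 1 / 2) := by
    have hi : IntegrableOn (fun u : ℝ => K * u ^ (δ - 3 / 2)) (Set.Ioi (z : ℝ)) :=
      (integrableOn_Ioi_rpow_of_lt (by linarith) hz0).const_mul K
    calc ∫ u in Set.Ioi (z : ℝ), E u * u ^ (δ - 2)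
        ≤ ∫ u in Set.Ioi (z : ℝ), K * u ^ (δ - 3 / 2) := by
          refine setIntegral_mono_on (herr.mono_set hsub2) hi measurableSet_Ioi fun u hu => ?_
          have hu1 : 1 ≤ u := hz1.trans (le_of_lt hu)
          have hu0 : 0 < u := by linarith
          have e : u ^ (δ - 3 / 2) = √u * u ^ (δ - 2) := by
            rw [Real.sqrt_eq_rpow, ← Real.rpow_add hu0]; congr 1; ring
          rw [e, ← mul_assoc]
          exact mul_le_mul_of_nonneg_right ((le_abs_self _).trans (hA u hu1)) (by positivity)
      _ = K * ((z : ℝ) ^ (δ - 1 / 2) / (1 / 2 - δ)) := by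
          rw [integral_const_mul, integral_Ioi_rpow_of_lt (by linarith) hz0]
          congr 1
          rw [show δ - 3 / 2 + 1 = -(1 / 2 - δ) by ring, neg_div_neg_eq]
          congr 2; ring
      _ ≤ K * (4 * (z : ℝ) ^ (δ - 1 / 2)) := by
          gcongr
          rw [div_le_iff₀ (by linarith)]
          have : 0 < (z : ℝ) ^ (δ - 1 / 2) := by positivity
          nlinarith
      _ = _ := by ring
  have hpowint : IntegrableOn (fun u : ℝ => u ^ (δ - 1)) (Set.Ioc (1 : ℝ) z) := by
    have := (intervalIntegral.intervalIntegrable_rpow' (a := 1) (b := z) (r := δ - 1)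
      (by linarith))
    exact (intervalIntegrable_iff_integrableOn_Ioc_of_le hz1).1 this
  have hpow : ∫ u in Set.Ioc (1 : ℝ) z, u ^ (δ - 1) = ((z : ℝ) ^ δ - 1) / δ := by
    rw [← intervalIntegral.integral_of_le hz1, integral_rpow (Or.inl (by linarith))]
    simp
  have hAE : ∀ u ∈ Set.Ioc (1 : ℝ) z, (∑ n ∈ Icc 1 ⌊u⌋₊, r n) * u ^ (δ - 2) =
      E u * u ^ (δ - 2) + ℓ * u ^ (δ - 1) := by
    intro u hu
    have hu0 : 0 < u := one_pos.trans hu.1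
    have : u ^ (δ - 1) = u * u ^ (δ - 2) := by
      rw [show δ - 1 = 1 + (δ - 2) by ring, Real.rpow_add hu0, Real.rpow_one]
    simp only [hE]
    rw [this]; ring
  have hsumint : IntegrableOn (fun u => E u * u ^ (δ - 2) + ℓ * u ^ (δ - 1)) (Set.Ioc (1 : ℝ) z) :=
    (herr.mono_set hsub1).add (hpowint.const_mul ℓ)
  have hAint : IntegrableOn (fun u : ℝ => (∑ n ∈ Icc 1 ⌊u⌋₊, r n) * u ^ (δ - 2))
      (Set.Ioc (1 : ℝ) z) :=
    hsumint.congr_fun (fun u hu => (hAE u hu).symm) measurableSet_Ioc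
  have hinit : ∫ u in Set.Ioc (1 : ℝ) z, (∑ n ∈ Icc 1 ⌊u⌋₊, r n) * u ^ (δ - 2) =
      (∫ u in Set.Ioc (1 : ℝ) z, E u * u ^ (δ - 2)) + ℓ * (((z : ℝ) ^ δ - 1) / δ) := by
    rw [setIntegral_congr_fun measurableSet_Ioc hAE,
      integral_add (herr.mono_set hsub1) (hpowint.const_mul ℓ), integral_const_mul, hpow]
  have hM : ∫ u in Set.Ioc (1 : ℝ) z, (∑ n ∈ Icc 1 ⌊u⌋₊, r n) * u ^ (δ - 2) ≤
      (z : ℝ) ^ δ * ∑ m ∈ Icc 1 z, r m / m := by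
    have hi2 : ∀ m ∈ Icc 1 z, IntegrableOn (fun u : ℝ => u ^ (-2 : ℝ)) (Set.Ici (m : ℝ)) := by
      intro m hm
      rw [integrableOn_Ici_iff_integrableOn_Ioi]
      have : (0 : ℝ) < m := by exact_mod_cast (mem_Icc.1 hm).1
      exact integrableOn_Ioi_rpow_of_lt (by norm_num) this
    have hi3 : ∀ m ∈ Icc 1 z, Integrable (fun u : ℝ =>
        (z : ℝ) ^ δ * r m * (Set.Ici (m : ℝ)).indicator (fun u : ℝ => u ^ (-2 : ℝ)) u) := by
      intro m hm
      exact ((hi2 m hm).integrable_indicator measurableSet_Ici).const_mul _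
    calc ∫ u in Set.Ioc (1 : ℝ) z, (∑ n ∈ Icc 1 ⌊u⌋₊, r n) * u ^ (δ - 2)
        ≤ ∫ u in Set.Ioc (1 : ℝ) z, ∑ m ∈ Icc 1 z,
            (z : ℝ) ^ δ * r m * (Set.Ici (m : ℝ)).indicator (fun u : ℝ => u ^ (-2 : ℝ)) u := by
          refine setIntegral_mono_on hAint
            (integrable_finsetSum _ fun m hm => (hi3 m hm).integrableOn) measurableSet_Ioc
            fun u hu => ?_
          have hu0 : 0 < u := one_pos.trans hu.1
          rw [sum_mul]
          have hsubs : Icc 1 ⌊u⌋₊ ⊆ Icc 1 z := by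
            apply Icc_subset_Icc_right
            have := Nat.floor_le_floor hu.2
            rwa [Nat.floor_natCast] at this
          have hzp : 0 ≤ (z : ℝ) ^ δ := by positivity
          refine (sum_le_sum fun m hm => ?_).trans
            (sum_le_sum_of_subset_of_nonneg hsubs fun m _ _ => ?_)
          · have hmu : u ∈ Set.Ici (m : ℝ) := by
              have := (mem_Icc.1 hm).2
              exact (Nat.le_floor_iff hu0.le).1 this
            rw [Set.indicator_of_mem hmu]
            have e : u ^ (δ - 2) = u ^ δ * u ^ (-2 : ℝ) := by
              rw [← Real.rpow_add hu0]; congr 1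
            have : u ^ δ ≤ (z : ℝ) ^ δ := Real.rpow_le_rpow hu0.le hu.2 h0.le
            rw [e, mul_comm ((z : ℝ) ^ δ), mul_assoc]
            gcongr
            exact hr m
          · refine mul_nonneg (mul_nonneg hzp (hr m)) (Set.indicator_nonneg (fun v hv => ?_) _)
            have : (0 : ℝ) ≤ v := (Nat.cast_nonneg m).trans hv
            positivity
      _ = ∑ m ∈ Icc 1 z, (z : ℝ) ^ δ * r m * ∫ u in Set.Ioc (1 : ℝ) z,
            (Set.Ici (m : ℝ)).indicator (fun u : ℝ => u ^ (-2 : ℝ)) u := by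
          rw [integral_finsetSum _ fun m hm => (hi3 m hm).integrableOn]
          simp_rw [integral_const_mul]
      _ ≤ ∑ m ∈ Icc 1 z, (z : ℝ) ^ δ * r m * (1 / m) := by
          refine sum_le_sum fun m hm => ?_
          have hzp : 0 ≤ (z : ℝ) ^ δ := by positivity
          refine mul_le_mul_of_nonneg_left ?_ (mul_nonneg hzp (hr m))
          have hm0 : (0 : ℝ) < m := by exact_mod_cast (mem_Icc.1 hm).1
          calc ∫ u in Set.Ioc (1 : ℝ) z, (Set.Ici (m : ℝ)).indicator (fun u : ℝ => u ^ (-2 : ℝ)) u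
              ≤ ∫ u, (Set.Ici (m : ℝ)).indicator (fun u : ℝ => u ^ (-2 : ℝ)) u := by
                refine setIntegral_le_integral
                  ((hi2 m hm).integrable_indicator measurableSet_Ici)
                  (Eventually.of_forall fun v => ?_)
                refine Set.indicator_nonneg (fun v hv => ?_) _
                have : (0 : ℝ) ≤ v := hm0.le.trans hv
                positivity
            _ = 1 / m := by
                rw [integral_indicator measurableSet_Ici, integral_Ici_eq_integral_Ioi,
                  integral_Ioi_rpow_of_lt (by norm_num) hm0]
                norm_num
                rw [Real.rpow_neg_one]
      _ = _ := by
          rw [mul_sum]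
          exact sum_congr rfl fun m _ => by ring
  have hzd : 0 < (z : ℝ) ^ δ := by positivity
  have key : ℓ * ((z : ℝ) ^ δ / δ) ≤
      (z : ℝ) ^ δ * ∑ m ∈ Icc 1 z, r m / m + 4 * K * (z : ℝ) ^ (δ - 1 / 2) := by
    have : ℓ * ((z : ℝ) ^ δ / δ) = ℓ / δ + ℓ * (((z : ℝ) ^ δ - 1) / δ) := by ring
    rw [this, ← heq, hsplit]
    linarith
  have e : (z : ℝ) ^ (δ - 1 / 2) = (z : ℝ) ^ δ / √z := by
    rw [Real.rpow_sub hz0, Real.sqrt_eq_rpow]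
  rw [e] at key
  have key2 : (z : ℝ) ^ δ * (ℓ / δ) ≤
      (z : ℝ) ^ δ * (∑ m ∈ Icc 1 z, r m / m + 4 * K / √z) := by
    calc _ = ℓ * ((z : ℝ) ^ δ / δ) := by ring
      _ ≤ _ := key
      _ = _ := by ring
  have := le_of_mul_le_mul_left key2 hzd
  rw [div_le_iff₀ h0] at this
  linarith

/-! ### Scarcity of primes with `χ p = 1` -/

/-- The products `m * p` with `m ≤ z < p` and `p` in `P` are distinct, and each contributes `2 * r m`
to `∑ r n`. Averaging over `m` with weights `r m / m` produces one `m` for which there are few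
`p ≤ N / m` in `P`. -/
theorem exists_few_good_primes (r : ℕ → ℝ) (hr : ∀ n, 0 ≤ r n) (hr1 : r 1 = 1)
    (P : ℕ → Prop) [DecidablePred P] (hP : ∀ p, P p → p.Prime)
    (hmul : ∀ m p, P p → 0 < m → m < p → r (m * p) = 2 * r m) (z N : ℕ) (hz : 1 ≤ z) :
    ∃ m ∈ Icc 1 z, 2 * m * (∑ m ∈ Icc 1 z, r m / m) * (#{p ∈ Ioc z (N / m) | P p} : ℝ) ≤
      ∑ n ∈ Icc 1 N, r n := by
  set M := ∑ m ∈ Icc 1 z, r m / m with hM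
  set A := ∑ n ∈ Icc 1 N, r n with hA
  have h1z : 1 ∈ Icc 1 z := mem_Icc.2 ⟨le_rfl, hz⟩
  have hMpos : 0 < M := by
    refine sum_pos' (fun m _ => div_nonneg (hr m) (by positivity)) ⟨1, h1z, ?_⟩
    rw [hr1]; norm_num
  have hinj : ∑ m ∈ Icc 1 z, 2 * r m * (#{p ∈ Ioc z (N / m) | P p} : ℝ) ≤ A := by
    have e : ∑ m ∈ Icc 1 z, 2 * r m * (#{p ∈ Ioc z (N / m) | P p} : ℝ) =
        ∑ x ∈ (Icc 1 z).sigma (fun m => {p ∈ Ioc z (N / m) | P p}), r (x.1 * x.2) := by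
      rw [sum_sigma]
      refine sum_congr rfl fun m hm => ?_
      rw [mem_Icc] at hm
      have : ∀ p ∈ {p ∈ Ioc z (N / m) | P p}, r (m * p) = 2 * r m := by
        intro p hp
        simp only [mem_filter, mem_Ioc] at hp
        exact hmul m p hp.2 (by omega) (by omega)
      rw [sum_congr rfl this, sum_const, nsmul_eq_mul, mul_comm]
    rw [e]
    have hinjOn : Set.InjOn (fun x : (_ : ℕ) × ℕ => x.1 * x.2)
        ((Icc 1 z).sigma (fun m => {p ∈ Ioc z (N / m) | P p}) : Set ((_ : ℕ) × ℕ)) := by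
      rintro ⟨m, p⟩ h ⟨m', p'⟩ h' heq
      simp only [coe_sigma, Set.mem_sigma_iff, mem_coe, mem_filter, mem_Ioc, mem_Icc] at h h' heq
      have hp := hP p h.2.2
      have hp' := hP p' h'.2.2
      have hpp : p = p' := by
        have hdvd : p ∣ m' * p' := heq ▸ Dvd.intro_left m rfl
        rcases (Nat.Prime.dvd_mul hp).1 hdvd with hd | hd
        · have := Nat.le_of_dvd (by omega) hd
          omega
        · exact (Nat.prime_dvd_prime_iff_eq hp hp').1 hd
      subst hpp
      have : m = m' := Nat.eq_of_mul_eq_mul_right hp.pos heq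
      subst this
      rfl
    rw [← sum_image (f := r) (g := fun x : (_ : ℕ) × ℕ => x.1 * x.2) hinjOn]
    refine sum_le_sum_of_subset_of_nonneg ?_ fun n _ _ => hr n
    intro n hn
    simp only [mem_image, mem_sigma, mem_filter, mem_Ioc, mem_Icc] at hn
    obtain ⟨⟨m, p⟩, ⟨hm, hp, -⟩, rfl⟩ := hn
    simp only at hm hp ⊢
    have : p * m ≤ N := (Nat.le_div_iff_mul_le (by omega)).1 hp.2
    rw [mem_Icc]
    exact ⟨Nat.mul_pos (by omega) (by omega), by rwa [mul_comm]⟩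
  by_contra hcon
  push Not at hcon
  have hlt : ∑ m ∈ Icc 1 z, r m / m * A <
      ∑ m ∈ Icc 1 z, M * (2 * r m * (#{p ∈ Ioc z (N / m) | P p} : ℝ)) := by
    have e : ∀ m ∈ Icc 1 z, M * (2 * r m * (#{p ∈ Ioc z (N / m) | P p} : ℝ)) =
        r m / m * (2 * m * M * (#{p ∈ Ioc z (N / m) | P p} : ℝ)) := by
      intro m hm
      have : (m : ℝ) ≠ 0 := by
        have := (mem_Icc.1 hm).1
        exact_mod_cast (by omega : m ≠ 0)
      field_simp
    rw [sum_congr rfl e]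
    refine sum_lt_sum (fun m hm => ?_) ⟨1, h1z, ?_⟩
    · exact mul_le_mul_of_nonneg_left (hcon m hm).le (div_nonneg (hr m) (by positivity))
    · refine mul_lt_mul_of_pos_left (hcon 1 h1z) ?_
      rw [hr1]; norm_num
  rw [← sum_mul, ← mul_sum] at hlt
  have := lt_of_mul_lt_mul_left hlt hMpos.le
  linarith

theorem isQuadratic_of_real {q : ℕ} (χ : DirichletCharacter ℂ q)
    (hre : ∀ a : ZMod q, (χ a).im = 0) : χ.IsQuadratic := by
  intro a
  by_cases ha : IsUnit a
  · right
    have h1 : ‖χ a‖ = 1 := by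
      obtain ⟨u, rfl⟩ := ha
      exact χ.unit_norm_eq_one u
    have h2 : χ a = ((χ a).re : ℂ) := Complex.ext (by simp) (by simp [hre])
    rw [h2, Complex.norm_real, Real.norm_eq_abs] at h1
    rcases abs_eq (zero_le_one) |>.1 h1 with h | h
    · left; rw [h2, h]; simp
    · right; rw [h2, h]; simp
  · left; exact χ.map_nonunit ha

theorem abs_char_le_one {q : ℕ} (χ : DirichletCharacter ℂ q) (a : ZMod q) : |(χ a).re| ≤ 1 :=
  (Complex.abs_re_le_norm _).trans (χ.norm_le_one a)

/-- Over a full period the values of a nontrivial character sum to zero, so all partial sums are at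
most `q`. -/
theorem abs_sum_char_le {q : ℕ} [NeZero q] (χ : DirichletCharacter ℂ q) (hq : 1 < q)
    (hχ : χ ≠ 1) (n : ℕ) :
    |∑ i ∈ Icc 1 n, (χ (i : ZMod q)).re| ≤ q := by
  have hperiod : ∑ i ∈ range q, χ (i : ZMod q) = 0 := by
    rw [← MulChar.sum_eq_zero_of_ne_one hχ]
    refine sum_bij' (fun i _ => (i : ZMod q)) (fun a _ => a.val) (by simp)
      (fun a _ => mem_range.2 (ZMod.val_lt a)) ?_ (by simp) (by simp)
    intro i hi
    exact ZMod.val_cast_of_lt (mem_range.1 hi)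
  have hmul : ∀ a : ℕ, ∑ i ∈ range (q * a), χ (i : ZMod q) = 0 := by
    intro a
    induction a with
    | zero => simp
    | succ a ih =>
      rw [Nat.mul_succ, sum_range_add, ih, zero_add, ← hperiod]
      refine sum_congr rfl fun i _ => ?_
      simp
  have hrange : ∀ n : ℕ, |∑ i ∈ range n, (χ (i : ZMod q)).re| ≤ q := by
    intro n
    have e : ∑ i ∈ range n, (χ (i : ZMod q)).re =
        ∑ i ∈ range (n % q), (χ ((q * (n / q) + i : ℕ) : ZMod q)).re := by
      conv_lhs => rw [← Nat.div_add_mod n q]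
      rw [sum_range_add, ← Complex.re_sum, hmul]
      simp
    rw [e]
    refine (abs_sum_le_sum_abs _ _).trans ?_
    refine (sum_le_sum fun i _ => abs_char_le_one χ _).trans ?_
    simp only [sum_const, card_range, nsmul_eq_mul, mul_one]
    exact_mod_cast (Nat.mod_lt n (by omega)).le
  have h0 : (χ ((0 : ℕ) : ZMod q)).re = 0 := by
    have : Fact (1 < q) := ⟨hq⟩
    rw [χ.map_nonunit (by simp)]; simp
  have e2 : ∑ i ∈ Icc 1 n, (χ (i : ZMod q)).re = ∑ i ∈ range (n + 1), (χ (i : ZMod q)).re := by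
    refine sum_subset (fun i hi => ?_) fun i hi hi' => ?_
    · rw [mem_Icc] at hi; rw [mem_range]; omega
    · have : i = 0 := by
        rw [mem_Icc] at hi'; rw [mem_range] at hi; omega
      rw [this, h0]
  rw [e2]
  exact hrange _

/-- If `L(1 - δ, χ) = 0` with `δ` small, then at some scale `t` between `q ^ 12` and `q ^ 16` very few
primes satisfy `χ p = 1`. The scale is `t = q ^ 16 / m` with some `m ≤ q ^ 4` found by averaging. -/
theorem few_split_primes {q : ℕ} [NeZero q] (hq : 1 < q) (χ : DirichletCharacter ℂ q) (hχ : χ ≠ 1)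
    (hre : ∀ a : ZMod q, (χ a).im = 0) (δ : ℝ) (h0 : 0 < δ) (h1 : δ ≤ 1 / 4)
    (hzero : χ.LFunction (1 - (δ : ℂ)) = 0) [DecidablePred fun p : ℕ => p.Prime ∧ χ p = 1] :
    ∃ t : ℕ, q ^ 12 ≤ t ∧ t ≤ q ^ 16 ∧
      (#((Ioc (q ^ 4) t).filter fun p : ℕ => p.Prime ∧ χ (p : ZMod q) = 1) : ℝ) ≤ t * (37 * δ + 7 / (q : ℝ) ^ 7) := by
  have hq1 : (1 : ℝ) < q := by exact_mod_cast hq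
  have hq0 : (0 : ℝ) < q := by linarith
  set c : ℕ → ℝ := fun n => (χ (n : ZMod q)).re with hc
  set r : ℕ → ℝ := fun n => ∑ d ∈ n.divisors, c d with hrdef
  have hzr : ∀ n, χ.zetaMul n = (r n : ℂ) := zetaMul_eq_ofReal χ hre
  have hquad := isQuadratic_of_real χ hre
  have hr : ∀ n, 0 ≤ r n := by
    intro n
    have := DirichletCharacter.zetaMul_nonneg (MulChar.isQuadratic_iff_sq_eq_one.1 hquad) n
    rw [hzr] at this
    exact_mod_cast this
  have hr1 : r 1 = 1 := by simp [hrdef, hc]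
  have hS := abs_sum_char_le χ hq hχ
  obtain ⟨ℓ, hℓ⟩ := exists_harmonic_limit c q hS
  have hAN := abs_sum_divisor_sums_sub_le c q ℓ hq1.le (fun n => abs_char_le_one χ _) hS hℓ
  have hℓabs : |ℓ| ≤ 2 * q := by
    have := hℓ 0
    simpa using this
  have hA : ∀ u : ℝ, 1 ≤ u → |∑ n ∈ Icc 1 ⌊u⌋₊, r n - ℓ * u| ≤ 9 * q * √u := by
    intro u hu
    have hfl : 1 ≤ ⌊u⌋₊ := Nat.one_le_floor_iff u |>.2 hu
    have b1 := hAN ⌊u⌋₊ hfl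
    have b2 : (⌊u⌋₊ : ℝ) ≤ u := Nat.floor_le (by linarith)
    have b3 : u < ⌊u⌋₊ + 1 := Nat.lt_floor_add_one u
    have b4 : √(⌊u⌋₊ : ℝ) ≤ √u := Real.sqrt_le_sqrt b2
    have b5 : 1 ≤ √u := Real.one_le_sqrt.2 hu
    have b6 : |ℓ * (⌊u⌋₊ : ℝ) - ℓ * u| ≤ 2 * q := by
      rw [← mul_sub, abs_mul]
      have : |(⌊u⌋₊ : ℝ) - u| ≤ 1 := by rw [abs_le]; constructor <;> linarith
      calc |ℓ| * _ ≤ 2 * q * 1 := mul_le_mul hℓabs this (abs_nonneg _) (by positivity)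
        _ = _ := by ring
    have b7 := abs_add_le (∑ n ∈ Icc 1 ⌊u⌋₊, r n - ℓ * ⌊u⌋₊) (ℓ * (⌊u⌋₊ : ℝ) - ℓ * u)
    rw [sub_add_sub_cancel] at b7
    calc _ ≤ _ := b7
      _ ≤ 7 * q * √(⌊u⌋₊ : ℝ) + 2 * q := add_le_add b1 b6
      _ ≤ 7 * q * √u + 2 * q * √u := by
          have e1 : 7 * (q : ℝ) * √(⌊u⌋₊ : ℝ) ≤ 7 * q * √u := by gcongr
          have e2 : 2 * (q : ℝ) ≤ 2 * q * √u := le_mul_of_one_le_right (by positivity) b5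
          linarith
      _ = _ := by ring
  have hLS : ∀ s : ℂ, 1 < s.re → (s - 1) * LSeries (fun n => (r n : ℂ)) s =
      DirichletCharacter.LFunctionTrivChar₁ 1 s * χ.LFunction s := by
    intro s hs
    have hs1 : s ≠ 1 := by rintro rfl; simp at hs
    have : (fun n => (r n : ℂ)) = fun n => χ.zetaMul n := funext fun n => (hzr n).symm
    rw [this, LSeries_zetaMul χ hs, DirichletCharacter.LFunctionTrivChar₁, Function.update_of_ne hs1,
      DirichletCharacter.LFunctionTrivChar, DirichletCharacter.LFunction_modOne_eq]
    ring
  obtain ⟨herr, heq⟩ := integral_error_eq_of_zero r (9 * q) ℓ hr hA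
    (fun s => DirichletCharacter.LFunctionTrivChar₁ 1 s * χ.LFunction s)
    ((DirichletCharacter.differentiable_LFunctionTrivChar₁ 1).mul
      (DirichletCharacter.differentiable_LFunction hχ)) hLS δ h0 (by linarith)
    (by simp only [hzero, mul_zero])
  have hres := residue_le_of_integral_error r (9 * q) ℓ hr hA δ h0 h1 herr heq (q ^ 4)
    (Nat.one_le_pow _ _ (by omega))
  obtain ⟨m, hm, hmain⟩ := exists_few_good_primes r hr hr1 (fun p : ℕ => p.Prime ∧ χ p = 1)
    (fun p h => h.1) (by
      rintro m p ⟨hp, hχp⟩ hm0 hmp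
      have hcop : m.Coprime p := by
        rw [Nat.coprime_comm, Nat.Prime.coprime_iff_not_dvd hp]
        exact Nat.not_dvd_of_pos_of_lt hm0 hmp
      have h2 : r p = 2 := by
        simp only [hrdef, hc, hp.sum_divisors, hχp]
        norm_num
      have h3 := χ.isMultiplicative_zetaMul.2 hcop
      simp only [hzr, h2] at h3
      have : r (m * p) = r m * 2 := by exact_mod_cast h3
      linarith) (q ^ 4) (q ^ 16) (Nat.one_le_pow _ _ (by omega))
  set M := ∑ m ∈ Icc 1 (q ^ 4), r m / m with hM
  have hM1 : 1 ≤ M := by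
    have h1z : 1 ∈ Icc 1 (q ^ 4) := mem_Icc.2 ⟨le_rfl, Nat.one_le_pow _ _ (by omega)⟩
    have := single_le_sum (f := fun m : ℕ => r m / m)
      (fun m _ => div_nonneg (hr m) (by positivity)) h1z
    simpa [hr1] using this
  rw [mem_Icc] at hm
  have hAq := hAN (q ^ 16) (Nat.one_le_pow _ _ (by omega))
  have hs4 : √((q ^ 4 : ℕ) : ℝ) = (q : ℝ) ^ 2 := by
    rw [show ((q ^ 4 : ℕ) : ℝ) = ((q : ℝ) ^ 2) ^ 2 by push_cast; ring, Real.sqrt_sq (by positivity)]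
  have hs16 : √((q ^ 16 : ℕ) : ℝ) = (q : ℝ) ^ 8 := by
    rw [show ((q ^ 16 : ℕ) : ℝ) = ((q : ℝ) ^ 8) ^ 2 by push_cast; ring, Real.sqrt_sq (by positivity)]
  rw [hs4] at hres
  rw [hs16] at hAq
  have hres' : ℓ ≤ δ * (37 * M) := by
    refine hres.trans ?_
    gcongr
    have : 4 * (9 * (q : ℝ)) / q ^ 2 ≤ 36 := by
      rw [div_le_iff₀ (by positivity)]; nlinarith
    linarith
  refine ⟨q ^ 16 / m, ?_, Nat.div_le_self _ _, ?_⟩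
  · rw [Nat.le_div_iff_mul_le (by omega)]
    calc q ^ 12 * m ≤ q ^ 12 * q ^ 4 := Nat.mul_le_mul_left _ hm.2
      _ = q ^ 16 := by ring
  set t := q ^ 16 / m with ht
  set π := (#((Ioc (q ^ 4) t).filter fun p : ℕ => p.Prime ∧ χ (p : ZMod q) = 1) : ℝ) with hπ
  have hm0 : (0 : ℝ) < m := by exact_mod_cast hm.1
  have ht1 : 1 ≤ t := by
    rw [ht, Nat.le_div_iff_mul_le (by omega), one_mul]
    exact hm.2.trans (Nat.pow_le_pow_right (by omega) (by norm_num))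
  have hNt : (q : ℝ) ^ 16 ≤ 2 * m * t := by
    have h := Nat.lt_mul_div_succ (q ^ 16) (show 0 < m by omega)
    rw [← ht] at h
    have : q ^ 16 ≤ 2 * m * t := by nlinarith
    exact_mod_cast this
  have hupper : ∑ n ∈ Icc 1 (q ^ 16), r n ≤ M * ((q : ℝ) ^ 16 * (37 * δ + 7 / (q : ℝ) ^ 7)) := by
    have h := (abs_le.1 hAq).2
    push_cast at h
    have e : 7 * (q : ℝ) * q ^ 8 ≤ M * ((q : ℝ) ^ 16 * (7 / (q : ℝ) ^ 7)) := by
      have : (q : ℝ) ^ 16 * (7 / (q : ℝ) ^ 7) = 7 * q * q ^ 8 := by field_simp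
      rw [this]
      have : 0 ≤ 7 * (q : ℝ) * q ^ 8 := by positivity
      nlinarith
    have e2 : ℓ * (q : ℝ) ^ 16 ≤ δ * (37 * M) * (q : ℝ) ^ 16 := by gcongr
    have e3 : ∑ n ∈ Icc 1 (q ^ 16), r n ≤ ℓ * (q : ℝ) ^ 16 + 7 * q * q ^ 8 := by linarith
    calc _ ≤ _ := e3
      _ ≤ δ * (37 * M) * (q : ℝ) ^ 16 + M * ((q : ℝ) ^ 16 * (7 / (q : ℝ) ^ 7)) := by linarith
      _ = _ := by ring
  set ε := 37 * δ + 7 / (q : ℝ) ^ 7 with hε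
  have hε0 : 0 ≤ ε := by positivity
  have h3 : M * (2 * m * π) ≤ M * ((q : ℝ) ^ 16 * ε) := by
    calc _ = 2 * m * M * π := by ring
      _ ≤ _ := hmain
      _ ≤ _ := hupper
  have h4 := le_of_mul_le_mul_left h3 (by linarith)
  have h5 : 2 * m * π ≤ 2 * m * (t * ε) := by
    calc _ ≤ _ := h4
      _ ≤ 2 * m * t * ε := by gcongr
      _ = _ := by ring
  exact le_of_mul_le_mul_left h5 (by positivity)

/-! ### A residue class with few primes -/

/-- Half of the reduced residue classes satisfy `χ a = 1`, because the nontrivial quadratic character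
`χ` has sum zero and `χ a + χ a ^ 2` is `2` on these classes and `0` elsewhere. -/
theorem totient_le_two_mul_card {q : ℕ} [NeZero q] (χ : DirichletCharacter ℂ q) (hχ : χ ≠ 1)
    (hquad : χ.IsQuadratic) [DecidablePred fun a : ZMod q => χ a = 1] :
    q.totient ≤ 2 * #{a : ZMod q | χ a = 1} := by
  have h0 := MulChar.sum_eq_zero_of_ne_one hχ
  have h1 : ∀ a : ZMod q, χ a + χ a ^ 2 = if χ a = 1 then 2 else 0 := by
    intro a
    rcases hquad a with h | h | h <;> simp [h] <;> norm_num
  have h2 : ∑ a : ZMod q, χ a ^ 2 = ((2 * #{a : ZMod q | χ a = 1} : ℕ) : ℂ) := by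
    have := Finset.sum_congr (rfl : (univ : Finset (ZMod q)) = univ) fun a _ => h1 a
    rw [sum_add_distrib, h0, zero_add, ← sum_filter, sum_const] at this
    rw [this]; push_cast; simp [mul_comm]
  have h3 : ∀ a : ZMod q, χ a ^ 2 = if IsUnit a then 1 else 0 := by
    intro a
    split_ifs with h
    · rcases hquad a with h' | h' | h'
      · exact absurd h' (h.map χ).ne_zero
      · simp [h']
      · simp [h']
    · simp [χ.map_nonunit h]
  simp only [h3, sum_boole] at h2
  have h4 : #{a : ZMod q | IsUnit a} = 2 * #{a : ZMod q | χ a = 1} := by exact_mod_cast h2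
  rw [← h4, ← ZMod.card_units_eq_totient, ← card_univ,
    ← card_map ⟨(Units.val : (ZMod q)ˣ → ZMod q), Units.val_injective⟩]
  refine card_le_card fun a ha => ?_
  obtain ⟨u, -, rfl⟩ := mem_map.1 ha
  simp

/-- By averaging, some class `b` with `χ b = 1` contains at most its share of the `p ∈ T` with
`χ p = 1`. -/
theorem exists_sparse_class {q : ℕ} [NeZero q] (χ : DirichletCharacter ℂ q) (hχ : χ ≠ 1)
    (hquad : χ.IsQuadratic) (T : Finset ℕ) [DecidablePred fun p : ℕ => χ (p : ZMod q) = 1] :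
    ∃ b : ℕ, b < q ∧ b.Coprime q ∧
      q.totient * #{p ∈ T | p % q = b} ≤ 2 * #(T.filter fun p : ℕ => χ (p : ZMod q) = 1) := by
  classical
  set B : Finset (ZMod q) := {a : ZMod q | χ a = 1} with hB
  have hBc := totient_le_two_mul_card χ hχ hquad
  have hfib := card_eq_sum_card_fiberwise (s := T.filter fun p : ℕ => χ (p : ZMod q) = 1) (t := B)
    (f := fun p : ℕ => (p : ZMod q)) (by
      intro p hp
      simpa [hB] using (mem_filter.1 hp).2)
  have hne : B.Nonempty := ⟨1, by simp [hB]⟩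
  obtain ⟨a, haB, ha⟩ := exists_min_image B
    (fun a => #((T.filter fun p : ℕ => χ (p : ZMod q) = 1).filter fun p : ℕ => (p : ZMod q) = a)) hne
  have hle := card_nsmul_le_sum B _ _ ha
  rw [← hfib, smul_eq_mul] at hle
  have hχa : χ a = 1 := by simpa [hB] using haB
  refine ⟨a.val, a.val_lt, ?_, ?_⟩
  · have hu : IsUnit a := by
      by_contra h
      rw [χ.map_nonunit h] at hχa
      exact zero_ne_one hχa
    rw [← ZMod.isUnit_iff_coprime]
    simpa using hu
  · have hsub : #{p ∈ T | p % q = a.val} ≤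
        #((T.filter fun p : ℕ => χ (p : ZMod q) = 1).filter fun p : ℕ => (p : ZMod q) = a) := by
      refine card_le_card fun p hp => ?_
      rw [mem_filter] at hp
      have : (p : ZMod q) = a := by
        rw [← ZMod.natCast_zmod_val a, ← hp.2, ZMod.natCast_mod]
      simp [hp.1, this, hχa]
    calc q.totient * _ ≤ 2 * #B * #((T.filter fun p : ℕ => χ (p : ZMod q) = 1).filter
          fun p : ℕ => (p : ZMod q) = a) := Nat.mul_le_mul hBc hsub
      _ ≤ _ := by rw [mul_assoc]; exact Nat.mul_le_mul_left 2 hle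

/-! ### Covering an interval by residue classes -/

/-- Some residue class modulo `p` contains at least `#S / p` elements of `S`. -/
theorem exists_class_heavy (S : Finset ℕ) (p : ℕ) (hp : 0 < p) :
    ∃ c, (#{n ∈ S | ¬ n ≡ c [MOD p]} : ℝ) ≤ #S * (1 - (p : ℝ)⁻¹) := by
  have hfib := card_eq_sum_card_fiberwise (s := S) (t := range p) (f := fun n => n % p)
    (fun n _ => by simpa using Nat.mod_lt n hp)
  obtain ⟨c, hc, hmax⟩ := exists_max_image (range p) (fun c => #{n ∈ S | n % p = c})
    ⟨0, mem_range.2 hp⟩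
  have hle := sum_le_card_nsmul (range p) _ _ hmax
  rw [← hfib, smul_eq_mul, card_range] at hle
  refine ⟨c, ?_⟩
  have hsplit := card_filter_add_card_filter_not (s := S) (fun n => n ≡ c [MOD p])
  have heq : #{n ∈ S | n % p = c} = #{n ∈ S | n ≡ c [MOD p]} := by
    congr 1
    refine filter_congr fun n _ => ?_
    rw [Nat.ModEq, Nat.mod_eq_of_lt (mem_range.1 hc)]
  rw [heq] at hle
  have h1 : (#S : ℝ) ≤ p * #{n ∈ S | n ≡ c [MOD p]} := by exact_mod_cast hle
  have h2 : (#{n ∈ S | n ≡ c [MOD p]} : ℝ) + #{n ∈ S | ¬ n ≡ c [MOD p]} = #S := by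
    exact_mod_cast hsplit
  have hp' : (0 : ℝ) < p := by exact_mod_cast hp
  have h3 : (#S : ℝ) * (p : ℝ)⁻¹ ≤ #{n ∈ S | n ≡ c [MOD p]} := by
    rw [← div_eq_mul_inv, div_le_iff₀ hp']; linarith
  linarith

/-- Greedy sieving: removing a most popular class for each modulus in turn leaves a proportion of at
most `∏ (1 - 1 / p)`. -/
theorem exists_greedy_classes (P : Finset ℕ) (hP : ∀ p ∈ P, 0 < p) (S : Finset ℕ) :
    ∃ a : ℕ → ℕ, (#{n ∈ S | ∀ p ∈ P, ¬ n ≡ a p [MOD p]} : ℝ) ≤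
      #S * ∏ p ∈ P, (1 - (p : ℝ)⁻¹) := by
  induction P using Finset.induction_on with
  | empty => exact ⟨fun _ => 0, by simp⟩
  | insert p P hp ih =>
    obtain ⟨a, ha⟩ := ih fun p' hp' => hP p' (mem_insert_of_mem hp')
    have hp0 := hP p (mem_insert_self _ _)
    obtain ⟨c, hc⟩ := exists_class_heavy {n ∈ S | ∀ p ∈ P, ¬ n ≡ a p [MOD p]} p hp0
    refine ⟨Function.update a p c, ?_⟩
    have heq : ({n ∈ S | ∀ p' ∈ insert p P, ¬ n ≡ Function.update a p c p' [MOD p']} : Finset ℕ) =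
        {n ∈ ({n ∈ S | ∀ p ∈ P, ¬ n ≡ a p [MOD p]} : Finset ℕ) | ¬ n ≡ c [MOD p]} := by
      rw [filter_filter]
      refine filter_congr fun n _ => ?_
      rw [forall_mem_insert, Function.update_self, and_comm]
      refine and_congr_left fun _ => forall₂_congr fun p' hp' => ?_
      rw [Function.update_of_ne (by rintro rfl; exact hp hp')]
    rw [heq, prod_insert hp]
    have hp1 : (1 : ℝ) ≤ p := by exact_mod_cast hp0
    have : (0 : ℝ) ≤ 1 - (p : ℝ)⁻¹ := sub_nonneg.2 (inv_le_one_of_one_le₀ hp1)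
    calc _ ≤ _ := hc
      _ ≤ (#S * ∏ p ∈ P, (1 - (p : ℝ)⁻¹)) * (1 - (p : ℝ)⁻¹) := by gcongr
      _ = _ := by ring

/-- With at least as many moduli as elements, each element can be removed by a modulus of its own. -/
theorem exists_classes_one_each (P S : Finset ℕ) (h : #S ≤ #P) :
    ∃ a : ℕ → ℕ, ∀ n ∈ S, ∃ p ∈ P, n = a p := by
  classical
  obtain ⟨f⟩ := Function.Embedding.nonempty_of_card_le (α := S) (β := P) (by simpa using h)
  refine ⟨fun p => if hp : ∃ s : S, (f s : ℕ) = p then (hp.choose : ℕ) else 0, fun n hn => ?_⟩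
  refine ⟨f ⟨n, hn⟩, (f ⟨n, hn⟩).2, ?_⟩
  have hp : ∃ s : S, (f s : ℕ) = f ⟨n, hn⟩ := ⟨⟨n, hn⟩, rfl⟩
  have := hp.choose_spec
  beta_reduce
  rw [dif_pos hp]
  have h2 := f.injective (Subtype.ext this)
  rw [h2]

/-- If the progression `b` modulo `q` contains few primes in `(√t, t]`, then `[1, y]` with
`q * y + b ≤ t` is covered by one residue class for each prime `p ≤ x`. A prime `p ≤ √t` not dividing
`q` removes the `n` with `p ∣ q * n + b`, so that only `n` with `q * n + b` prime survive. The primes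
dividing `q` thin the survivors by the factor `φ(q) / q` greedily, and the primes in `(√t, x]` remove
the rest one by one. -/
theorem exists_covering (q b t x y : ℕ) (hq : 2 ≤ q) (hb : b.Coprime q) (hy : q * y + b ≤ t)
    (hqt : q ^ 2 ≤ t) (hsx : t.sqrt ≤ x)
    (hcard : (#{p ∈ Ioc t.sqrt t | p.Prime ∧ p % q = b % q} : ℝ) * (q.totient / q : ℝ) ≤
      #{p ∈ Ioc t.sqrt x | p.Prime}) :
    ∃ a : ℕ → ℕ, ∀ n ∈ Icc 1 y, ∃ p, p.Prime ∧ p ≤ x ∧ n ≡ a p [MOD p] := by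
  classical
  have hA : ∀ p : ℕ, p.Prime → ¬ p ∣ q → ∃ c, ∀ n, p ∣ q * n + b → n ≡ c [MOD p] := by
    intro p hp hpq
    by_cases hex : ∃ c, p ∣ q * c + b
    · obtain ⟨c, hc⟩ := hex
      refine ⟨c, fun n hn => ?_⟩
      have h1 : q * n + b ≡ q * c + b [MOD p] :=
        ((Nat.modEq_zero_iff_dvd).2 hn).trans ((Nat.modEq_zero_iff_dvd).2 hc).symm
      exact Nat.ModEq.cancel_left_of_coprime
        ((Nat.Prime.coprime_iff_not_dvd hp).2 hpq) (Nat.ModEq.add_right_cancel' b h1)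
    · exact ⟨0, fun n hn => absurd ⟨n, hn⟩ hex⟩
  choose! A hA using hA
  -- `S`: survivors of the primes up to `√t` not dividing `q`; each `q * n + b` with `n ∈ S` is prime
  set S : Finset ℕ := {n ∈ Icc 1 y | ∀ p, p.Prime → ¬ p ∣ q → p ≤ t.sqrt → ¬ n ≡ A p [MOD p]}
    with hS
  have hScard : #S ≤ #{p ∈ Ioc t.sqrt t | p.Prime ∧ p % q = b % q} := by
    refine card_le_card_of_injOn (fun n => q * n + b) ?_ ?_
    · intro n hn
      obtain ⟨hn1, hn2⟩ := mem_filter.1 hn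
      rw [mem_Icc] at hn1
      have hge : 2 ≤ q * n + b := by nlinarith [hn1.1]
      have hle : q * n + b ≤ t := by nlinarith [hn1.2]
      set w := q * n + b with hw
      have hmp : w.minFac.Prime := Nat.minFac_prime (by omega)
      have hmq : ¬ w.minFac ∣ q := by
        intro h
        have h1 : w.minFac ∣ b := (Nat.dvd_add_right (h.mul_right n)).1 (Nat.minFac_dvd w)
        have h2 := Nat.dvd_gcd h1 h
        rw [hb] at h2
        exact hmp.one_lt.ne' (Nat.dvd_one.1 h2)
      have hgt : t.sqrt < w.minFac := by
        by_contra! h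
        exact hn2 _ hmp hmq h (hA _ hmp hmq _ (Nat.minFac_dvd w))
      have hwp : w.Prime := by
        by_contra h
        have h1 := Nat.minFac_sq_le_self (by omega) h
        have h2 : w.minFac ≤ t.sqrt := Nat.le_sqrt'.2 (h1.trans hle)
        omega
      simp only [coe_filter, mem_Ioc, Set.mem_ofPred_eq]
      refine ⟨⟨hgt.trans_le (Nat.minFac_le (by omega)), hle⟩, hwp, ?_⟩
      simp
    · intro n _ m _ h
      have h' : q * n = q * m := by simpa using h
      exact Nat.eq_of_mul_eq_mul_left (by omega) h'
  obtain ⟨g, hg⟩ := exists_greedy_classes q.primeFactors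
    (fun p hp => (Nat.prime_of_mem_primeFactors hp).pos) S
  have htot : ∏ p ∈ q.primeFactors, (1 - (p : ℝ)⁻¹) = q.totient / q := by
    have := Nat.totient_eq_mul_prod_factors q
    have h' : (q.totient : ℝ) = q * ∏ p ∈ q.primeFactors, (1 - (p : ℝ)⁻¹) := by
      have h2 := congrArg (fun z : ℚ => (z : ℝ)) this
      push_cast at h2
      exact h2
    have : (q : ℝ) ≠ 0 := by positivity
    rw [h']; field_simp
  rw [htot] at hg
  set S' : Finset ℕ := {n ∈ S | ∀ p ∈ q.primeFactors, ¬ n ≡ g p [MOD p]} with hS'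
  have hS'card : #S' ≤ #{p ∈ Ioc t.sqrt x | p.Prime} := by
    have h1 : (#S : ℝ) * (q.totient / q) ≤
        (#{p ∈ Ioc t.sqrt t | p.Prime ∧ p % q = b % q} : ℝ) * (q.totient / q : ℝ) := by
      have : (#S : ℝ) ≤ #{p ∈ Ioc t.sqrt t | p.Prime ∧ p % q = b % q} := by exact_mod_cast hScard
      gcongr
    exact_mod_cast (hg.trans h1).trans hcard
  obtain ⟨f, hf⟩ := exists_classes_one_each _ _ hS'card
  refine ⟨fun p => if p ∣ q then g p else if p ≤ t.sqrt then A p else f p, fun n hn => ?_⟩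
  have hqs : q ≤ t.sqrt := Nat.le_sqrt'.2 hqt
  by_cases hnS : n ∈ S
  · by_cases hnS' : n ∈ S'
    · obtain ⟨p, hp, hnp⟩ := hf n hnS'
      simp only [mem_filter, mem_Ioc] at hp
      have hpq : ¬ p ∣ q := fun h => by
        have := Nat.le_of_dvd (by omega) h
        omega
      refine ⟨p, hp.2, hp.1.2, ?_⟩
      beta_reduce
      rw [if_neg hpq, if_neg (by omega), ← hnp]
    · simp only [hS', mem_filter, hnS, true_and] at hnS'
      push Not at hnS'
      obtain ⟨p, hp, hnp⟩ := hnS'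
      have hpq := Nat.dvd_of_mem_primeFactors hp
      refine ⟨p, Nat.prime_of_mem_primeFactors hp, ?_, ?_⟩
      · exact (Nat.le_of_dvd (by omega) hpq).trans (hqs.trans hsx)
      · beta_reduce
        rwa [if_pos hpq]
  · simp only [hS, mem_filter, hn, true_and] at hnS
    push Not at hnS
    obtain ⟨p, hp, hpq, hps, hnp⟩ := hnS
    exact ⟨p, hp, hps.trans hsx, by beta_reduce; rwa [if_neg hpq, if_pos hps]⟩

/-! ### From coverings to prime gaps -/

/-- A covering of `[1, y]` by residue classes modulo the primes up to `x` shifts, by the Chinese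
remainder theorem, to `y` consecutive composite numbers below twice the primorial of `x`. Bertrand's
postulate and `primorial x ≤ 4 ^ x` keep the next prime below `4 ^ (x + 1)`. -/
theorem le_primeGap_of_covering (x y : ℕ) (hy : 1 ≤ y) (a : ℕ → ℕ)
    (ha : ∀ n ∈ Icc 1 y, ∃ p, p.Prime ∧ p ≤ x ∧ n ≡ a p [MOD p]) :
    y ≤ primeGap ((4 : ℝ) ^ (x + 1)) := by
  classical
  set T : Finset ℕ := {p ∈ range (x + 1) | p.Prime} with hT
  have hprime : ∀ p ∈ T, p.Prime := fun p hp => (mem_filter.1 hp).2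
  have hmem : ∀ p, p.Prime → p ≤ x → p ∈ T := fun p hp hpx =>
    mem_filter.2 ⟨mem_range.2 (by omega), hp⟩
  -- `(p - 1) * a p` represents `-a p` modulo `p` without subtraction of residues
  obtain ⟨v, hv⟩ := Nat.chineseRemainderOfFinset (fun p => (p - 1) * a p) (fun p => p) T
    (fun p hp => (hprime p hp).ne_zero)
    (fun p hp p' hp' hne => (Nat.coprime_primes (hprime p hp) (hprime p' hp')).2 hne)
  set w := v % primorial x with hw
  have hPpos : 0 < primorial x := primorial_pos x
  have hdvd : ∀ p ∈ T, p ∣ primorial x := fun p hp => dvd_prod_of_mem _ hp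
  -- adding the primorial makes `u` at least as large as every prime up to `x`
  set u := w + primorial x with hu
  have hu4 : 2 * u < 4 ^ (x + 1) := by
    have h1 := Nat.mod_lt v hPpos
    have h2 := primorial_le_four_pow x
    rw [pow_succ]; omega
  have hcomp : ∀ n ∈ Icc 1 y, ¬ (u + n).Prime := by
    intro n hn
    obtain ⟨p, hp, hpx, hnp⟩ := ha n hn
    have hpT := hmem p hp hpx
    have hle : p ≤ primorial x := Nat.le_of_dvd hPpos (hdvd p hpT)
    have hd : p ∣ u + n := by
      rw [← Nat.modEq_zero_iff_dvd]
      have e1 : w ≡ v [MOD p] := (Nat.mod_modEq v _).of_dvd (hdvd p hpT)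
      have e2 : u ≡ (p - 1) * a p + 0 [MOD p] :=
        (e1.trans (hv p hpT)).add ((Nat.modEq_zero_iff_dvd).2 (hdvd p hpT))
      have e3 := e2.add hnp
      refine e3.trans ((Nat.modEq_zero_iff_dvd).2 ⟨a p, ?_⟩)
      obtain ⟨j, rfl⟩ : ∃ j, p = j + 1 := ⟨p - 1, by have := hp.pos; omega⟩
      simp; ring
    rw [mem_Icc] at hn
    intro hpr
    have := (Nat.prime_dvd_prime_iff_eq hp hpr).1 hd
    omega
  have hu2 : 2 ≤ u := by
    obtain ⟨p, hp, hpx, -⟩ := ha 1 (mem_Icc.2 ⟨le_rfl, hy⟩)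
    have := Nat.le_of_dvd hPpos (hdvd p (hmem p hp hpx))
    have := hp.two_le
    omega
  obtain ⟨p₁, hp₁, hup₁, hp₁u⟩ := Nat.exists_prime_lt_and_le_two_mul u (by omega)
  have hex : ∃ p', p'.Prime ∧ u < p' := ⟨p₁, hp₁, hup₁⟩
  set p' := Nat.find hex with hp'
  obtain ⟨hp'1, hp'2⟩ := Nat.find_spec hex
  have hp'3 : p' ≤ p₁ := Nat.find_min' hex ⟨hp₁, hup₁⟩
  set p := Nat.findGreatest Nat.Prime u with hp
  have hpp : p.Prime := Nat.findGreatest_spec hu2 Nat.prime_two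
  have hpu : p ≤ u := Nat.findGreatest_le u
  have hgap : y < p' - u := by
    by_contra! h
    refine hcomp (p' - u) (mem_Icc.2 ⟨by omega, h⟩) ?_
    rwa [show u + (p' - u) = p' by omega]
  have hbdd : BddAbove {d : ℕ | ∃ p p' : ℕ, p.Prime ∧ p'.Prime ∧ p < p' ∧
      (p' : ℝ) ≤ (4 : ℝ) ^ (x + 1) ∧
      (∀ r : ℕ, p < r → r < p' → ¬ r.Prime) ∧ d = p' - p} := by
    refine ⟨4 ^ (x + 1), ?_⟩
    rintro d ⟨p, p', -, -, -, h, -, rfl⟩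
    have : p' ≤ 4 ^ (x + 1) := by exact_mod_cast h
    omega
  have hle : p' - p ≤ primeGap ((4 : ℝ) ^ (x + 1)) := by
    refine le_csSup hbdd ⟨p, p', hpp, hp'1, by omega, ?_, ?_, rfl⟩
    · have : p' ≤ 4 ^ (x + 1) := by omega
      exact_mod_cast this
    · intro r h1 h2 hr
      rcases le_or_gt r u with h | h
      · have := Nat.le_findGreatest h hr
        omega
      · exact Nat.find_min hex h2 ⟨hr, h⟩
  omega

/-! ### Choice of parameters -/

/-- Chebyshev's lower bound in the form `π(x) ≥ x / (2 log x)`. -/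
theorem pi_ge_half (x : ℕ) (hx : 1000 ≤ x) :
    (x : ℝ) / (2 * Real.log x) ≤ Nat.primeCounting x := by
  have hx' : (1000 : ℝ) ≤ x := by exact_mod_cast hx
  have hlog : 0 < Real.log x := Real.log_pos (by linarith)
  refine le_trans ?_ (Chebyshev.pi_ge x)
  rw [div_le_div_iff₀ (by positivity) hlog]
  have h1 : Real.log (x + 1) ≤ x * 0.19 := by
    have e1 : Real.log (x + 1) = 2 * Real.log √(x + 1) := by
      rw [Real.log_sqrt (by positivity)]; ring
    have e2 := Real.log_le_sub_one_of_pos (Real.sqrt_pos.2 (show (0 : ℝ) < x + 1 by linarith))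
    have e3 : √((x : ℝ) + 1) ≤ x * 0.09 := by
      rw [Real.sqrt_le_left (by positivity)]
      nlinarith
    linarith
  have h2 := Real.log_two_gt_d9
  have h3 : (x : ℝ) ≤ 2 * (x * Real.log 2 - Real.log (x + 1)) := by nlinarith
  calc (x : ℝ) * Real.log x ≤ 2 * (x * Real.log 2 - Real.log (x + 1)) * Real.log x := by gcongr
    _ = _ := by ring

set_option maxHeartbeats 1000000 in
/-- The choice of parameters: with `L = log q`, `R = t / q` and `x = ⌈2848 R L ^ (1 - k)⌉`, the primes up
to `x` cover an interval of length about `R`. As `log X ≍ x` and `log log X ≤ 16 L` for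
`X = 4 ^ (x + 1)`, this length is `≫ log X (log log X) ^ (k - 1)`. -/
theorem large_gap_of_sparse_class (k q t b : ℕ) (hk : 2 ≤ k) (hq : 11392 ≤ q)
    (hLq : Real.log q ^ k ≤ q) (ht : q ^ 12 ≤ t) (ht' : t ≤ q ^ 16) (hbq : b < q)
    (hb : b.Coprime q)
    (hN : (#{p ∈ Ioc (q ^ 4) t | p.Prime ∧ p % q = b} : ℝ) * (q.totient / q : ℝ) ≤
      88 * (t / q / Real.log q ^ k)) :
    ∃ X : ℝ, q ≤ X ∧ (primeGap X : ℝ) ≥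
      1 / (22784 * 16 ^ (k - 1)) * Real.log X * Real.log (Real.log X) ^ (k - 1) := by
  set L := Real.log q with hL
  have hqr : (11392 : ℝ) ≤ q := by exact_mod_cast hq
  have hq0 : (0 : ℝ) < q := by linarith
  have hL1 : 1 ≤ L := by
    rw [hL, Real.le_log_iff_exp_le hq0]
    linarith [Real.exp_one_lt_d9]
  have hLpos : 0 < L := by linarith
  have htr : (q : ℝ) ^ 12 ≤ t := by exact_mod_cast ht
  have htr' : (t : ℝ) ≤ q ^ 16 := by exact_mod_cast ht'
  have ht0 : (0 : ℝ) < t := lt_of_lt_of_le (by positivity) htr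
  have hLk : L ^ k = L * L ^ (k - 1) := by
    rw [← pow_succ']; congr 1; omega
  have hLk1 : 1 ≤ L ^ (k - 1) := one_le_pow₀ hL1
  set R : ℝ := t / q with hR
  have hRq : q * R = t := by rw [hR]; field_simp
  have hR0 : 0 < R := by positivity
  -- `V` bounds `√t`, and `88 * V` bounds the number of survivors
  set V : ℝ := R / L ^ k with hV
  have hV0 : 0 < V := by positivity
  have hsqrt : √(t : ℝ) ≤ V := by
    have h6 : (q : ℝ) ^ 6 ≤ √t := Real.le_sqrt_of_sq_le (by rw [← pow_mul]; exact htr)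
    rw [hV, le_div_iff₀ (by positivity)]
    have hss : √(t : ℝ) * √t = q * R := by rw [hRq]; exact Real.mul_self_sqrt ht0.le
    have hs0 : 0 ≤ √(t : ℝ) := Real.sqrt_nonneg _
    have h1 : (q : ℝ) * (√t * L ^ k) ≤ q * R := by
      rw [← hss]
      have : (q : ℝ) * L ^ k ≤ √t := by
        refine le_trans ?_ h6
        calc (q : ℝ) * L ^ k ≤ q * q := by gcongr
          _ = (q : ℝ) ^ 2 := by ring
          _ ≤ q ^ 6 := pow_le_pow_right₀ (by linarith) (by norm_num)
      calc (q : ℝ) * (√t * L ^ k) = √t * (q * L ^ k) := by ring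
        _ ≤ _ := by gcongr
    exact le_of_mul_le_mul_left h1 hq0
  have hqV : (q : ℝ) ≤ V := by
    refine le_trans ?_ hsqrt
    refine Real.le_sqrt_of_sq_le (le_trans ?_ htr)
    exact pow_le_pow_right₀ (by linarith) (by norm_num)
  set W : ℝ := 2848 * (L * V) with hW
  have hVW : 2848 * V ≤ W := by rw [hW]; nlinarith
  have hWR : W * L ^ (k - 1) = 2848 * R := by
    rw [hW, hV, hLk]; field_simp
  have hWt : 4 * W ≤ t := by
    have h1 : W ≤ 2848 * R := by rw [← hWR]; exact le_mul_of_one_le_right (by positivity) hLk1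
    rw [← hRq]; nlinarith
  set x := ⌈W⌉₊ with hx
  have hxW : W ≤ x := Nat.le_ceil W
  have hxW' : (x : ℝ) < W + 1 := Nat.ceil_lt_add_one (by linarith)
  have hxt : (x : ℝ) ≤ t := by linarith
  have hx1000 : 1000 ≤ x := by
    have : (1000 : ℝ) ≤ x := by linarith
    exact_mod_cast this
  have hlogt : Real.log t ≤ 16 * L := by
    have := Real.log_le_log ht0 htr'
    rwa [Real.log_pow] at this
  have hx0 : (0 : ℝ) < x := by linarith
  have hlogx : Real.log x ≤ 16 * L := (Real.log_le_log hx0 hxt).trans hlogt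
  have hlogx0 : 0 < Real.log x := Real.log_pos (by linarith)
  have hpi : 89 * V ≤ Nat.primeCounting x := by
    refine le_trans ?_ (pi_ge_half x hx1000)
    rw [le_div_iff₀ (by positivity)]
    calc 89 * V * (2 * Real.log x) ≤ 89 * V * (2 * (16 * L)) := by gcongr
      _ = W := by rw [hW]; ring
      _ ≤ x := hxW
  have hst : (t.sqrt : ℝ) ≤ V := (Real.nat_sqrt_le_real_sqrt).trans hsqrt
  have hsx : t.sqrt ≤ x := by
    have : (t.sqrt : ℝ) ≤ x := by linarith
    exact_mod_cast this
  have hcount : Nat.primeCounting x ≤ t.sqrt + #{p ∈ Ioc t.sqrt x | p.Prime} := by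
    rw [Nat.primeCounting, Nat.primeCounting', Nat.count_eq_card_filter_range]
    calc #{p ∈ range (x + 1) | p.Prime} ≤ #(Icc 1 t.sqrt ∪ {p ∈ Ioc t.sqrt x | p.Prime}) := by
          refine card_le_card fun p hp => ?_
          simp only [mem_filter, mem_range, mem_union, mem_Icc, mem_Ioc] at hp ⊢
          have := hp.2.pos
          by_cases h : p ≤ t.sqrt
          · exact Or.inl ⟨this, h⟩
          · exact Or.inr ⟨⟨by omega, by omega⟩, hp.2⟩
      _ ≤ _ := (card_union_le _ _).trans (by simp)
  have hcount' : 88 * V ≤ #{p ∈ Ioc t.sqrt x | p.Prime} := by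
    have : (Nat.primeCounting x : ℝ) ≤ t.sqrt + #{p ∈ Ioc t.sqrt x | p.Prime} := by
      exact_mod_cast hcount
    linarith
  have h4s : q ^ 4 ≤ t.sqrt := by
    refine Nat.le_sqrt'.2 (le_trans ?_ ht)
    rw [← pow_mul]
    exact Nat.pow_le_pow_right (by omega) (by norm_num)
  have hcard : (#{p ∈ Ioc t.sqrt t | p.Prime ∧ p % q = b % q} : ℝ) * (q.totient / q : ℝ) ≤
      #{p ∈ Ioc t.sqrt x | p.Prime} := by
    refine le_trans (le_trans ?_ hN) hcount'
    have : #{p ∈ Ioc t.sqrt t | p.Prime ∧ p % q = b % q} ≤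
        #{p ∈ Ioc (q ^ 4) t | p.Prime ∧ p % q = b} := by
      refine card_le_card fun p hp => ?_
      rw [Nat.mod_eq_of_lt hbq] at hp
      simp only [mem_filter, mem_Ioc] at hp ⊢
      exact ⟨⟨by omega, hp.1.2⟩, hp.2⟩
    gcongr
  -- `y = ⌊t / q⌋ - 1` is the largest convenient length with `q y + b ≤ t`
  obtain ⟨y, hy⟩ : ∃ y, t / q = y + 1 := by
    refine ⟨t / q - 1, ?_⟩
    have : 1 ≤ t / q := by
      rw [Nat.le_div_iff_mul_le (by omega), one_mul]
      exact le_trans (Nat.le_self_pow (by norm_num) q) ht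
    omega
  have hyt : q * y + b ≤ t := by
    have := Nat.mul_div_le t q
    rw [hy] at this
    nlinarith
  have hyR : R ≤ y + 2 := by
    have h := Nat.lt_mul_div_succ t (show 0 < q by omega)
    rw [hy] at h
    have h2 : (t : ℝ) ≤ q * (y + 1 + 1) := by exact_mod_cast h.le
    rw [hR, div_le_iff₀ hq0]; linarith
  have hRV : V ≤ R := div_le_self hR0.le (one_le_pow₀ hL1)
  have hy1 : 1 ≤ y := by
    have : (1 : ℝ) ≤ y := by linarith
    exact_mod_cast this
  obtain ⟨a, ha⟩ := exists_covering q b t x y (by omega) hb hyt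
    ((Nat.pow_le_pow_right (by omega) (by norm_num)).trans ht) hsx hcard
  have hgap := le_primeGap_of_covering x y hy1 a ha
  refine ⟨(4 : ℝ) ^ (x + 1), ?_, ?_⟩
  · have h1 : x + 1 < 4 ^ (x + 1) := Nat.lt_pow_self (by norm_num)
    have h2 : (x : ℝ) + 1 < 4 ^ (x + 1) := by exact_mod_cast h1
    linarith
  set X : ℝ := (4 : ℝ) ^ (x + 1) with hX
  have hlogX : Real.log X = (x + 1) * Real.log 4 := by
    rw [hX, Real.log_pow]; push_cast; ring
  have hlog4 : Real.log 4 = 2 * Real.log 2 := by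
    rw [show (4 : ℝ) = 2 ^ 2 by norm_num, Real.log_pow]; push_cast; ring
  have hl2 := Real.log_two_gt_d9
  have hl2' := Real.log_two_lt_d9
  have hlogX1 : 1 ≤ Real.log X := by
    rw [hlogX, hlog4]
    calc (1 : ℝ) ≤ 1 * (2 * Real.log 2) := by linarith
      _ ≤ (x + 1) * (2 * Real.log 2) := by gcongr; linarith
  have hlogX4 : Real.log X ≤ 4 * W := by
    rw [hlogX, hlog4]
    calc ((x : ℝ) + 1) * (2 * Real.log 2) ≤ (2 * W) * 2 := by gcongr <;> linarith
      _ = 4 * W := by ring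
  have hll0 : 0 ≤ Real.log (Real.log X) := Real.log_nonneg hlogX1
  have hll : Real.log (Real.log X) ≤ 16 * L :=
    (Real.log_le_log (by linarith) (hlogX4.trans hWt)).trans hlogt
  have hyg : (y : ℝ) ≤ primeGap X := by exact_mod_cast hgap
  refine ge_iff_le.2 (le_trans ?_ hyg)
  calc 1 / (22784 * 16 ^ (k - 1)) * Real.log X * Real.log (Real.log X) ^ (k - 1)
      ≤ 1 / (22784 * 16 ^ (k - 1)) * (4 * W) * (16 * L) ^ (k - 1) := by gcongr
    _ = 4 * (W * L ^ (k - 1)) / 22784 := by rw [mul_pow]; field_simp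
    _ = R / 2 := by rw [hWR]; ring
    _ ≤ y := by linarith

end Helpers

open Finset Filter in
/-- If, for a fixed `k ≥ 2`, there are infinitely many conductors `q` admitting a real
primitive Dirichlet character `χ` mod `q` with a real zero `L(1-δ_q, χ) = 0` where
`0 < δ_q ≤ (log q)^{-k}`, then `limsup_{X→∞} G(X)/((log X)(log log X)^{k-1}) > 0`. -/
theorem exceptional_zero_sequence_implies_gaps (k : ℕ) (hk : 2 ≤ k)
    (H : ∀ Q : ℕ, ∃ (q : ℕ) (hq : NeZero q) (χ : DirichletCharacter ℂ q) (δ : ℝ),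
      Q < q ∧ χ.IsPrimitive ∧ (∀ a : ZMod q, (χ a).im = 0) ∧
      0 < δ ∧ δ ≤ ((Real.log q) ^ k)⁻¹ ∧
      @DirichletCharacter.LFunction q hq χ (1 - (δ : ℂ)) = 0) :
    ∃ C : ℝ, 0 < C ∧ ∀ X₀ : ℝ, ∃ X : ℝ, X₀ ≤ X ∧
      (primeGap X : ℝ) ≥ C * Real.log X * (Real.log (Real.log X)) ^ (k - 1) := by
  classical
  refine ⟨1 / (22784 * 16 ^ (k - 1)), by positivity, fun X₀ => ?_⟩
  have hev : ∀ᶠ n : ℕ in atTop, Real.log n ^ k ≤ n := by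
    have h := (Real.isLittleO_pow_log_id_atTop (n := k)).bound one_pos
    filter_upwards [tendsto_natCast_atTop_atTop.eventually h, eventually_ge_atTop 1] with n hn h1
    have h0 : 0 ≤ Real.log n := Real.log_nonneg (by exact_mod_cast h1)
    simpa [abs_of_nonneg h0] using hn
  obtain ⟨Q₁, hQ₁⟩ := eventually_atTop.1 hev
  obtain ⟨q, hq0, χ, δ, hQq, hprim, hre, hδ0, hδ, hzero⟩ := H (max Q₁ (max 11392 ⌈X₀⌉₊))
  have hqQ : Q₁ ≤ q := by omega
  have hq : 11392 ≤ q := by omega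
  have hqX : ⌈X₀⌉₊ ≤ q := by omega
  have hLq := hQ₁ q hqQ
  have hχ : χ ≠ 1 := by
    rintro rfl
    rw [DirichletCharacter.IsPrimitive, DirichletCharacter.conductor_one] at hprim
    omega
  have hquad := isQuadratic_of_real χ hre
  have hqr : (11392 : ℝ) ≤ q := by exact_mod_cast hq
  have hqpos : (0 : ℝ) < q := by linarith
  set L := Real.log q with hL
  have hL2 : 2 ≤ L := by
    rw [hL, Real.le_log_iff_exp_le hqpos]
    have : Real.exp 2 = Real.exp 1 ^ 2 := by rw [← Real.exp_nat_mul]; norm_num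
    rw [this]
    nlinarith [Real.exp_one_lt_d9, Real.exp_pos 1]
  have hLk : 4 ≤ L ^ k := by
    calc (4 : ℝ) = 2 ^ 2 := by norm_num
      _ ≤ L ^ 2 := by gcongr
      _ ≤ L ^ k := pow_le_pow_right₀ (by linarith) hk
  have hLk0 : 0 < L ^ k := by linarith
  have hδ4 : δ ≤ 1 / 4 := by
    refine hδ.trans ?_
    rw [one_div]
    exact inv_anti₀ (by norm_num) hLk
  obtain ⟨t, ht, ht', hfew⟩ := few_split_primes (by omega) χ hχ hre δ hδ0 hδ4 hzero
  obtain ⟨b, hbq, hb, hbcount⟩ := exists_sparse_class χ hχ hquad {p ∈ Ioc (q ^ 4) t | p.Prime}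
  rw [filter_filter, filter_filter] at hbcount
  have hfew' : (#((Ioc (q ^ 4) t).filter fun p : ℕ => p.Prime ∧ χ (p : ZMod q) = 1) : ℝ) ≤
      44 * (t / L ^ k) := by
    refine hfew.trans ?_
    have h7 : 7 / (q : ℝ) ^ 7 ≤ 7 * (L ^ k)⁻¹ := by
      rw [div_eq_mul_inv]
      gcongr
      exact hLq.trans (le_self_pow₀ (by linarith) (by norm_num))
    calc (t : ℝ) * (37 * δ + 7 / (q : ℝ) ^ 7) ≤ t * (37 * (L ^ k)⁻¹ + 7 * (L ^ k)⁻¹) := by gcongr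
      _ = _ := by ring
  have hN : (#{p ∈ Ioc (q ^ 4) t | p.Prime ∧ p % q = b} : ℝ) * (q.totient / q : ℝ) ≤
      88 * (t / q / L ^ k) := by
    have h1 : (q.totient : ℝ) * #{p ∈ Ioc (q ^ 4) t | p.Prime ∧ p % q = b} ≤
        2 * #((Ioc (q ^ 4) t).filter fun p : ℕ => p.Prime ∧ χ (p : ZMod q) = 1) := by
      exact_mod_cast hbcount
    calc _ = ((q.totient : ℝ) * #{p ∈ Ioc (q ^ 4) t | p.Prime ∧ p % q = b}) / q := by ring
      _ ≤ 2 * (44 * (t / L ^ k)) / q := by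
          refine div_le_div_of_nonneg_right (h1.trans ?_) hqpos.le
          exact mul_le_mul_of_nonneg_left hfew' zero_le_two
      _ = _ := by ring
  obtain ⟨X, hX, hgap⟩ := large_gap_of_sparse_class k q t b hk hq hLq ht ht' hbq hb hN
  refine ⟨X, ?_, hgap⟩
  have : X₀ ≤ q := (Nat.le_ceil X₀).trans (by exact_mod_cast hqX)
  linarith
end

section
/- Let c > 2 be fixed. Suppose that there are infinitely many pairs of integers (q,b) with 0 < b < q, gcd(b,q) = 1, and L(q,b) ≥ q^c. Then limsup_{X→∞} G(X) / (log X)^{2−2/c} > 0; that is, there exist a constant C > 0 and an unbounded set of X with G(X) ≥ C·(log X)^{2−2/c}. -/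
theorem le_primeGap {X : ℝ} {p p' : ℕ} (hp : p.Prime) (hp' : p'.Prime) (hlt : p < p')
    (hX : (p' : ℝ) ≤ X) (hr : ∀ r : ℕ, p < r → r < p' → ¬ r.Prime) :
    p' - p ≤ primeGap X := by
  refine le_csSup ⟨⌊X⌋₊, ?_⟩ ⟨p, p', hp, hp', hlt, hX, hr, rfl⟩
  rintro d ⟨a, a', -, -, -, ha, -, rfl⟩
  exact (Nat.sub_le _ _).trans (Nat.le_floor ha)

/-- A run of `K` composite numbers starting after `n` lies inside a prime gap of length more than
`K`, whose right end is at most `2n` by Bertrand's postulate. -/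
theorem exists_prime_gap {n K : ℕ} (hn : 2 ≤ n)
    (hcomp : ∀ k, 1 ≤ k → k ≤ K → ¬ (n + k).Prime) :
    ∃ X : ℕ, K + 1 ≤ X ∧ X ≤ 2 * n ∧ K + 1 ≤ primeGap X := by
  classical
  obtain ⟨r, hr, hnr, hr2⟩ := Nat.exists_prime_lt_and_le_two_mul n (by omega)
  have hex : ∃ r, r.Prime ∧ n < r := ⟨r, hr, hnr⟩
  obtain ⟨hp'1, hp'2⟩ := Nat.find_spec hex
  have hmin : ∀ m, m < Nat.find hex → ¬ (m.Prime ∧ n < m) := fun m hm => Nat.find_min hex hm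
  have hle : Nat.find hex ≤ r := Nat.find_min' hex ⟨hr, hnr⟩
  generalize Nat.find hex = p' at *
  have hp1 : (Nat.findGreatest Nat.Prime n).Prime := Nat.findGreatest_spec hn Nat.prime_two
  have hp2 : Nat.findGreatest Nat.Prime n ≤ n := Nat.findGreatest_le n
  have hp3 : ∀ m, Nat.findGreatest Nat.Prime n < m → m ≤ n → ¬ m.Prime :=
    fun m h1 h2 => Nat.findGreatest_is_greatest h1 h2
  generalize Nat.findGreatest Nat.Prime n = p at *
  have hK : n + K < p' := by
    by_contra h
    refine hcomp (p' - n) (by omega) (by omega) ?_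
    rwa [Nat.add_sub_cancel' hp'2.le]
  have hgap := le_primeGap (X := (p' : ℝ)) hp1 hp'1 (by omega) le_rfl (fun m h1 h2 hm => by
    rcases le_or_gt m n with h | h
    · exact hp3 m h1 h hm
    · exact hmin m h2 ⟨hm, h⟩)
  exact ⟨p', by omega, by omega, by omega⟩

/-- If each `b + kq` with `1 ≤ k ≤ K` has a prime factor at most `N` that does not divide `q`, then
the `K` integers following some `n ≤ 3 · 4^N` are composite: division by `q`
modulo the primes up to `N` carries the progression to an interval. -/
theorem composite_run {q b N K : ℕ} (hq : 0 < q)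
    (h : ∀ k, 1 ≤ k → k ≤ K → ∃ p, p.Prime ∧ p ≤ N ∧ ¬ p ∣ q ∧ p ∣ b + k * q) :
    ∃ n, 2 ≤ n ∧ n ≤ 3 * 4 ^ N ∧ ∀ k, 1 ≤ k → k ≤ K → ¬ (n + k).Prime := by
  classical
  set S := (Finset.range (N + 1)).filter (fun p => p.Prime ∧ ¬ p ∣ q) with hS
  set P := ∏ p ∈ S, p with hP
  have hSprime : ∀ p ∈ S, p.Prime := fun p hp => (Finset.mem_filter.1 hp).2.1
  have hPpos : 0 < P := Finset.prod_pos fun p hp => (hSprime p hp).pos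
  have hP4 : P ≤ 4 ^ N := by
    refine le_trans ?_ (primorial_le_four_pow N)
    refine Finset.prod_le_prod_of_subset_of_one_le' ?_ ?_
    · intro p hp
      simp only [hS, Finset.mem_filter] at hp
      simpa using ⟨by simpa using hp.1, hp.2.1⟩
    · intro p hp _
      exact (Finset.mem_filter.1 hp).2.one_lt.le
  have hco : Nat.Coprime q P := Nat.Coprime.prod_right fun p hp =>
    (((hSprime p hp).coprime_iff_not_dvd).2 (Finset.mem_filter.1 hp).2.2).symm
  have hylt := Nat.chineseRemainder_lt_mul hco 0 b hq.ne' hPpos.ne'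
  obtain ⟨hy0, hyb⟩ := (Nat.chineseRemainder hco 0 b).2
  generalize ((Nat.chineseRemainder hco 0 b : {k // k ≡ 0 [MOD q] ∧ k ≡ b [MOD P]}) : ℕ) = y at *
  obtain ⟨n₀, rfl⟩ := (Nat.modEq_zero_iff_dvd).1 hy0
  have hn₀ : n₀ < P := lt_of_mul_lt_mul_left hylt (Nat.zero_le q)
  refine ⟨n₀ + 2 * P, by omega, by omega, fun k hk1 hkK hprime => ?_⟩
  obtain ⟨p, hp, hpN, hpq, hpd⟩ := h k hk1 hkK
  have hpP : p ∣ P := by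
    refine Finset.dvd_prod_of_mem (fun p => p) (Finset.mem_filter.2 ⟨?_, hp, hpq⟩)
    exact Finset.mem_range.2 (by omega)
  have hmod : q * (n₀ + k) ≡ b + k * q [MOD p] := by
    have := (hyb.of_dvd hpP).add_right (k * q)
    rwa [mul_comm k q, ← mul_add, mul_comm q k] at this
  have hdvd : p ∣ q * (n₀ + k) := (hmod.dvd_iff dvd_rfl).2 hpd
  have hdvd' : p ∣ n₀ + 2 * P + k := by
    have h1 := (hp.dvd_mul.1 hdvd).resolve_left hpq
    have h2 := dvd_add h1 (hpP.mul_left 2)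
    rwa [show n₀ + k + 2 * P = n₀ + 2 * P + k by ring] at h2
  -- `p ≤ P < n₀ + 2P + k`, so `p` is a proper divisor.
  have := Nat.le_of_dvd hPpos hpP
  have := (Nat.prime_dvd_prime_iff_eq hp hprime).1 hdvd'
  omega

/-- If, for a fixed `c > 2`, there are infinitely many pairs `(q, b)` with
`0 < b < q`, `gcd(b,q) = 1` and `L(q,b) ≥ q^c`, then
`limsup_{X→∞} G(X)/(log X)^{2-2/c} > 0`. -/
theorem linnik_violation_implies_gaps (c : ℝ) (hc : 2 < c)
    (H : ∀ Q : ℕ, ∃ q b : ℕ, Q < q ∧ 0 < b ∧ b < q ∧ Nat.gcd b q = 1 ∧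
      (q : ℝ) ^ c ≤ (leastPrime q b : ℝ)) :
    ∃ C : ℝ, 0 < C ∧ ∀ X₀ : ℝ, ∃ X : ℝ, X₀ ≤ X ∧
      (primeGap X : ℝ) ≥ C * (Real.log X) ^ (2 - 2 / c) := by
  refine ⟨1 / (2 * 24 ^ (2 - 2 / c)), by positivity, fun X₀ => ?_⟩
  obtain ⟨q, b, hQq, hb, hbq, hgcd, hL⟩ := H ⌈X₀⌉₊
  have hq : 0 < q := by omega
  have hq1 : (1 : ℝ) ≤ q := by exact_mod_cast hq
  have hq0 : (0 : ℝ) < q := by linarith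
  set N := ⌊(q : ℝ) ^ (c / 2)⌋₊ with hN
  set M := ⌊(q : ℝ) ^ (c - 1)⌋₊ with hM
  have hN1 : 1 ≤ N := Nat.le_floor (by
    push_cast; exact Real.one_le_rpow hq1 (by linarith))
  have hqM : q ≤ M := Nat.le_floor (by
    simpa using Real.rpow_le_rpow_of_exponent_le hq1 (show (1 : ℝ) ≤ c - 1 by linarith))
  have hMle : (M : ℝ) ≤ (q : ℝ) ^ (c - 1) := Nat.floor_le (by positivity)
  have hMge : (q : ℝ) ^ (c - 1) ≤ 2 * M := by
    have h1 := Nat.lt_floor_add_one ((q : ℝ) ^ (c - 1))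
    have h2 : (1 : ℝ) ≤ M := by exact_mod_cast hq.trans_le hqM
    rw [← hM] at h1
    linarith
  have hqc : (q : ℝ) * (q : ℝ) ^ (c - 1) = (q : ℝ) ^ c := by
    rw [Real.rpow_sub_one hq0.ne']; field_simp
  have hfac : ∀ k, 1 ≤ k → k ≤ M - 1 → ∃ p, p.Prime ∧ p ≤ N ∧ ¬ p ∣ q ∧ p ∣ b + k * q := by
    intro k hk1 hkM
    have hlt : ((b + k * q : ℕ) : ℝ) < (q : ℝ) ^ c := by
      have h1 : b + k * q < q * M := by
        have : (k + 1) * q ≤ M * q := Nat.mul_le_mul_right q (by omega)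
        nlinarith
      calc ((b + k * q : ℕ) : ℝ) < ((q * M : ℕ) : ℝ) := by exact_mod_cast h1
        _ = q * M := by push_cast; ring
        _ ≤ q * (q : ℝ) ^ (c - 1) := by gcongr
        _ = _ := hqc
    have hnp : ¬ (b + k * q).Prime := fun hpr => by
      have h1 : leastPrime q b ≤ b + k * q := Nat.sInf_le ⟨hpr, by simp⟩
      have h2 : (leastPrime q b : ℝ) ≤ ((b + k * q : ℕ) : ℝ) := by exact_mod_cast h1
      linarith
    -- `k ≥ 1` excludes the value `1`, which is not prime but has no prime factor.
    have hne : b + k * q ≠ 1 := by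
      have : 1 * q ≤ k * q := Nat.mul_le_mul_right q hk1
      omega
    have hmp := Nat.minFac_prime hne
    refine ⟨_, hmp, ?_, fun hdq => ?_, Nat.minFac_dvd _⟩
    · have h1 := Nat.minFac_sq_le_self (by omega) hnp
      have h2 : ((b + k * q).minFac : ℝ) ^ 2 ≤ ((b + k * q : ℕ) : ℝ) := by exact_mod_cast h1
      have h3 : ((q : ℝ) ^ (c / 2)) ^ 2 = (q : ℝ) ^ c := by
        rw [← Real.rpow_natCast, ← Real.rpow_mul hq0.le]; congr 1; push_cast; ring
      refine Nat.le_floor (le_of_sq_le_sq ?_ (by positivity))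
      rw [h3]; linarith
    · have h1 := (Nat.dvd_add_left (hdq.mul_left k)).1 (Nat.minFac_dvd (b + k * q))
      have h2 := Nat.dvd_gcd h1 hdq
      rw [hgcd] at h2
      exact hmp.one_lt.ne' (Nat.dvd_one.1 h2)
  obtain ⟨n, hn2, hn4, hcomp⟩ := composite_run hq hfac
  obtain ⟨X, hX1, hX2, hgap⟩ := exists_prime_gap hn2 hcomp
  refine ⟨X, ?_, ?_⟩
  · exact (Nat.le_ceil X₀).trans (by exact_mod_cast (by omega : ⌈X₀⌉₊ ≤ X))
  have hXN : X ≤ 24 ^ N := by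
    have h1 : 6 ^ 1 ≤ 6 ^ N := Nat.pow_le_pow_right (by norm_num) hN1
    calc X ≤ 6 ^ 1 * 4 ^ N := by omega
      _ ≤ 6 ^ N * 4 ^ N := Nat.mul_le_mul_right _ h1
      _ = 24 ^ N := by rw [← mul_pow]; norm_num
  have hX0 : (1 : ℝ) ≤ X := by exact_mod_cast (by omega : 1 ≤ X)
  have hlog : Real.log X ≤ 24 * (q : ℝ) ^ (c / 2) := by
    calc Real.log X ≤ Real.log ((24 : ℝ) ^ N) :=
          Real.log_le_log (by linarith) (by exact_mod_cast hXN)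
      _ = N * Real.log 24 := by rw [Real.log_pow]
      _ ≤ N * 24 := by gcongr; exact Real.log_le_self (by norm_num)
      _ ≤ (q : ℝ) ^ (c / 2) * 24 := by gcongr; exact Nat.floor_le (by positivity)
      _ = _ := mul_comm _ _
  have hexp : 0 ≤ 2 - 2 / c := by
    have : 2 / c ≤ 1 := (div_le_one (by linarith)).2 hc.le
    linarith
  have hpow : Real.log X ^ (2 - 2 / c) ≤ 24 ^ (2 - 2 / c) * (q : ℝ) ^ (c - 1) := by
    calc Real.log X ^ (2 - 2 / c) ≤ (24 * (q : ℝ) ^ (c / 2)) ^ (2 - 2 / c) :=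
          Real.rpow_le_rpow (Real.log_nonneg hX0) hlog hexp
      _ = 24 ^ (2 - 2 / c) * (q : ℝ) ^ (c - 1) := by
          rw [Real.mul_rpow (by norm_num) (by positivity), ← Real.rpow_mul hq0.le]
          congr 2
          field_simp
  have hgapM : (M : ℝ) ≤ primeGap X := by exact_mod_cast (by omega : M ≤ primeGap X)
  rw [ge_iff_le, one_div, inv_mul_le_iff₀ (by positivity)]
  calc Real.log X ^ (2 - 2 / c) ≤ 24 ^ (2 - 2 / c) * (q : ℝ) ^ (c - 1) := hpow
    _ ≤ 24 ^ (2 - 2 / c) * (2 * primeGap X) := by gcongr; linarith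
    _ = _ := by ring
end

section
/- For all sufficiently large x, one has G(x) ≥ J((1/2)·log x): the largest gap between consecutive primes up to x is at least the maximal gap between consecutive integers free of prime factors ≤ (1/2)·log x. -/
theorem prime_dvd_primorial_floor {u : ℝ} {p : ℕ} (hp : p.Prime) (hpu : (p : ℝ) ≤ u) :
    p ∣ primorial ⌊u⌋₊ := by
  unfold primorial
  apply Finset.dvd_prod_of_mem
  simp only [Finset.mem_filter, Finset.mem_range]
  exact ⟨Nat.lt_succ_of_le (Nat.le_floor hpu), hp⟩

theorem not_dvd_add_primorial {u : ℝ} {n : ℕ}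
    (hn : ∀ p : ℕ, p.Prime → (p : ℝ) ≤ u → ¬ p ∣ n) :
    ∀ p : ℕ, p.Prime → (p : ℝ) ≤ u → ¬ p ∣ n + primorial ⌊u⌋₊ := by
  intro p hp hpu h
  exact hn p hp hpu ((Nat.dvd_add_left (prime_dvd_primorial_floor hp hpu)).1 h)

theorem exists_consecutive_primes {u : ℝ} (hu : 2 ≤ u) {n n' : ℕ} (hnn' : n < n')
    (hn : ∀ p : ℕ, p.Prime → (p : ℝ) ≤ u → ¬ p ∣ n)
    (hgap : ∀ m : ℕ, n < m → m < n' → ∃ p : ℕ, p.Prime ∧ (p : ℝ) ≤ u ∧ p ∣ m) :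
    ∃ p p' : ℕ, p.Prime ∧ p'.Prime ∧ p < p' ∧ p' ≤ 6 * primorial ⌊u⌋₊ ∧
      (∀ r : ℕ, p < r → r < p' → ¬ r.Prime) ∧ n' - n ≤ p' - p := by
  have hdvd : ∀ {p : ℕ}, p.Prime → (p : ℝ) ≤ u → p ∣ primorial ⌊u⌋₊ :=
    prime_dvd_primorial_floor
  have hPpos : 0 < primorial ⌊u⌋₊ := primorial_pos _
  have hshift := not_dvd_add_primorial hn
  generalize primorial ⌊u⌋₊ = P at *
  have hP2 : 2 ≤ P := Nat.le_of_dvd hPpos (hdvd Nat.prime_two (by exact_mod_cast hu))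
  have hdP : n' ≤ n + P := by
    by_contra! h
    obtain ⟨p, hp, hpu, hpd⟩ := hgap (n + P) (by omega) h
    exact hshift p hp hpu hpd
  obtain ⟨d, rfl⟩ : ∃ d, n' = n + d := ⟨n' - n, by omega⟩
  obtain ⟨m, hm⟩ : ∃ m, m = n % P + P := ⟨_, rfl⟩
  have hmod : n % P < P := Nat.mod_lt _ hPpos
  have hcomp : ∀ r, m < r → r < m + d → ¬ r.Prime := by
    intro r h1 h2 hr
    obtain ⟨p, hp, hpu, hpd⟩ := hgap (n + (r - m)) (by omega) (by omega)
    have hpP := hdvd hp hpu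
    have hpr : p ∣ r := by
      have e : r + P * (n / P) = n + (r - m) + P := by
        have := Nat.mod_add_div n P
        omega
      have h3 : p ∣ r + P * (n / P) := e ▸ dvd_add hpd hpP
      exact (Nat.dvd_add_left (hpP.mul_right _)).1 h3
    have hle := Nat.le_of_dvd hPpos hpP
    rcases (Nat.dvd_prime hr).1 hpr with h | h
    · exact hp.one_lt.ne' h
    · omega
  classical
  obtain ⟨q, hq, hlt, hle⟩ := Nat.exists_prime_lt_and_le_two_mul (m + d) (by omega)
  have hex : ∃ q, q.Prime ∧ m + d ≤ q := ⟨q, hq, hlt.le⟩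
  have hspec := Nat.find_spec hex
  have hmin : Nat.find hex ≤ q := Nat.find_min' hex ⟨hq, hlt.le⟩
  have hg : (Nat.findGreatest Nat.Prime m).Prime :=
    Nat.findGreatest_spec (P := Nat.Prime) (m := 2) (by omega) Nat.prime_two
  have hgle : Nat.findGreatest Nat.Prime m ≤ m := Nat.findGreatest_le m
  refine ⟨_, Nat.find hex, hg, hspec.1, by omega, by omega, ?_, by omega⟩
  intro r h1 h2 hr
  rcases le_or_gt r m with h | h
  · exact Nat.findGreatest_is_greatest h1 h hr
  · rcases lt_or_ge r (m + d) with h' | h'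
    · exact hcomp r h h' hr
    · exact Nat.find_min hex h2 ⟨hr, h'⟩

/-- The bound `P ≤ 4 ^ u = x ^ log 2` leaves room for the factor `6` as soon as
`(1 - log 2) * log x ≥ log 6`; `x ≥ exp 20` is ample. -/
theorem six_mul_primorial_le {x : ℝ} (hx : Real.exp 20 ≤ x) :
    ((6 * primorial ⌊(1 / 2) * Real.log x⌋₊ : ℕ) : ℝ) ≤ x := by
  have hx0 : 0 < x := (Real.exp_pos _).trans_le hx
  have hy : 20 ≤ Real.log x := (Real.le_log_iff_exp_le hx0).2 hx
  set y := Real.log x with hydef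
  have h1 : (primorial ⌊(1 / 2) * y⌋₊ : ℝ) ≤ Real.exp (y * Real.log 2) := by
    calc (primorial ⌊(1 / 2) * y⌋₊ : ℝ) ≤ (4 : ℝ) ^ ⌊(1 / 2) * y⌋₊ := by
          exact_mod_cast primorial_le_four_pow _
      _ = (4 : ℝ) ^ ((⌊(1 / 2) * y⌋₊ : ℕ) : ℝ) := (Real.rpow_natCast _ _).symm
      _ ≤ (4 : ℝ) ^ ((1 / 2) * y) :=
          Real.rpow_le_rpow_of_exponent_le (by norm_num) (Nat.floor_le (by linarith))
      _ = Real.exp (y * Real.log 2) := by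
          rw [Real.rpow_def_of_pos (by norm_num), show (4 : ℝ) = 2 ^ 2 by norm_num, Real.log_pow]
          congr 1
          push_cast
          ring
  have h2 : (6 : ℝ) ≤ Real.exp (y * (1 - Real.log 2)) := by
    have := Real.add_one_le_exp (y * (1 - Real.log 2))
    nlinarith [Real.log_two_lt_d9]
  calc ((6 * primorial ⌊(1 / 2) * y⌋₊ : ℕ) : ℝ) = 6 * (primorial ⌊(1 / 2) * y⌋₊ : ℝ) := by
        push_cast; ring
    _ ≤ Real.exp (y * (1 - Real.log 2)) * Real.exp (y * Real.log 2) := by gcongr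
    _ = x := by rw [← Real.exp_add, ← Real.exp_log hx0, ← hydef]; congr 1; ring

/-- For all sufficiently large `x`, `G(x) ≥ J((1/2) log x)`. -/
theorem primeGap_ge_jacobsthal :
    ∃ x₀ : ℝ, ∀ x : ℝ, x ≥ x₀ →
      primeGap x ≥ jacobsthal ((1 / 2) * Real.log x) := by
  refine ⟨Real.exp 20, fun x hx => ?_⟩
  have hx0 : 0 < x := (Real.exp_pos _).trans_le hx
  have hy : 20 ≤ Real.log x := (Real.le_log_iff_exp_le hx0).2 hx
  -- In `ℕ` the supremum of the empty set is `0`, so only an upper bound has to be checked.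
  refine csSup_le' ?_
  rintro _ ⟨n, n', -, hlt, hn, -, hgap, rfl⟩
  obtain ⟨p, p', hp, hp', hpp', hle, hcons, hd⟩ :=
    exists_consecutive_primes (by linarith) hlt hn hgap
  refine hd.trans (le_csSup ⟨⌊x⌋₊, ?_⟩ ⟨p, p', hp, hp', hpp', ?_, hcons, rfl⟩)
  · rintro _ ⟨a, b, -, -, -, hb, -, rfl⟩
    exact (Nat.sub_le _ _).trans (Nat.le_floor hb)
  · exact (Nat.cast_le.2 hle).trans (six_mul_primorial_le hx)
end

section
/- Let q be a positive integer, let T ≥ 2 be a real number, and suppose that q has at most one prime factor exceeding T. Then for every finite set N of integers there exists, for each prime p dividing q with p ≤ T, a residue class a_p modulo p, such that the number of elements of N lying in none of the chosen classes is at most 2·(φ(q)/q)·|N|. -/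
/-- One greedy step: some class mod `p` removes at least a proportion `1/p` of `M`. -/
theorem exists_class_filter_card_le (p : ℕ) (hp : 0 < p) (M : Finset ℤ) :
    ∃ c : ℤ, ((M.filter (fun n => ¬ n ≡ c [ZMOD (p : ℤ)])).card : ℝ)
      ≤ (1 - (p : ℝ)⁻¹) * M.card := by
  have : NeZero p := ⟨hp.ne'⟩
  have hp0 : (p : ℝ) ≠ 0 := by exact_mod_cast hp.ne'
  obtain ⟨y, -, hy⟩ := Finset.exists_le_card_fiber_of_nsmul_le_card_of_maps_to
    (s := M) (t := (Finset.univ : Finset (ZMod p))) (f := fun n : ℤ => (n : ZMod p))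
    (b := (p : ℝ)⁻¹ * M.card) (fun _ _ => Finset.mem_univ _) Finset.univ_nonempty
    (by simp [ZMod.card, mul_inv_cancel_left₀ hp0])
  obtain ⟨c, rfl⟩ := ZMod.intCast_surjective y
  refine ⟨c, ?_⟩
  simp only [ZMod.intCast_eq_intCast_iff] at hy
  have h : ((M.filter (fun n => n ≡ c [ZMOD (p : ℤ)])).card : ℝ)
      + (M.filter (fun n => ¬ n ≡ c [ZMOD (p : ℤ)])).card = M.card := by
    exact_mod_cast Finset.card_filter_add_card_filter_not (s := M) _
  linarith

/-- Iterating the greedy step over a finite set of primes. -/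
theorem exists_classes_filter_card_le (N : Finset ℤ) (S : Finset ℕ) (hS : ∀ p ∈ S, p.Prime) :
    ∃ a : ℕ → ℤ, ((N.filter (fun n => ∀ p ∈ S, ¬ n ≡ a p [ZMOD (p : ℤ)])).card : ℝ)
      ≤ (∏ p ∈ S, (1 - (p : ℝ)⁻¹)) * N.card := by
  induction S using Finset.induction_on with
  | empty => exact ⟨0, by simp⟩
  | insert r S hr ih =>
    obtain ⟨a, ha⟩ := ih fun p hp => hS p (Finset.mem_insert_of_mem hp)
    have hrp : r.Prime := hS r (Finset.mem_insert_self _ _)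
    obtain ⟨c, hc⟩ := exists_class_filter_card_le r hrp.pos
      (N.filter (fun n => ∀ p ∈ S, ¬ n ≡ a p [ZMOD (p : ℤ)]))
    refine ⟨Function.update a r c, ?_⟩
    have hset : N.filter (fun n => ∀ p ∈ insert r S,
          ¬ n ≡ Function.update a r c p [ZMOD (p : ℤ)])
        = (N.filter (fun n => ∀ p ∈ S, ¬ n ≡ a p [ZMOD (p : ℤ)])).filter
          (fun n => ¬ n ≡ c [ZMOD (r : ℤ)]) := by
      rw [Finset.filter_filter]
      refine Finset.filter_congr fun n _ => ?_
      rw [Finset.forall_mem_insert, Function.update_self, and_comm]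
      refine and_congr_left fun _ => forall₂_congr fun p hp => ?_
      rw [Function.update_of_ne (ne_of_mem_of_not_mem hp hr)]
    have h0 : (0 : ℝ) ≤ 1 - (r : ℝ)⁻¹ :=
      sub_nonneg.2 (inv_le_one_of_one_le₀ (by exact_mod_cast hrp.one_le))
    rw [hset, Finset.prod_insert hr, mul_assoc]
    exact hc.trans (mul_le_mul_of_nonneg_left ha h0)

/-- **Greedy covering by prime factors of `q`.** If `q` has at most one prime factor
exceeding `T` (where `T ≥ 2`), then for any finite set `N` of integers one can choose,
for each prime `p ∣ q` with `p ≤ T`, a residue class `a_p` mod `p`, so that at most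
`2·(φ(q)/q)·|N|` elements of `N` lie in none of the chosen classes. -/
theorem greedy_covering_small_prime_factors (q : ℕ) (hq : 0 < q) (T : ℝ) (hT : 2 ≤ T)
    (hone : ∀ p₁ p₂ : ℕ, p₁.Prime → p₂.Prime → p₁ ∣ q → p₂ ∣ q →
      T < (p₁ : ℝ) → T < (p₂ : ℝ) → p₁ = p₂) :
    ∀ N : Finset ℤ, ∃ a : ℕ → ℤ,
      ({n : ℤ | n ∈ N ∧ ∀ p : ℕ, p.Prime → p ∣ q → (p : ℝ) ≤ T →
          ¬ (n ≡ a p [ZMOD (p : ℤ)])}.ncard : ℝ)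
        ≤ 2 * ((q.totient : ℝ) / (q : ℝ)) * (N.card : ℝ) := by
  intro N
  obtain ⟨a, ha⟩ := exists_classes_filter_card_le N
    (q.primeFactors.filter (fun p : ℕ => (p : ℝ) ≤ T))
    fun p hp => Nat.prime_of_mem_primeFactors (Finset.mem_filter.1 hp).1
  refine ⟨a, ?_⟩
  have hset : {n : ℤ | n ∈ N ∧ ∀ p : ℕ, p.Prime → p ∣ q → (p : ℝ) ≤ T →
      ¬ (n ≡ a p [ZMOD (p : ℤ)])} = ((N.filter (fun n => ∀ p ∈
        q.primeFactors.filter (fun p : ℕ => (p : ℝ) ≤ T), ¬ n ≡ a p [ZMOD (p : ℤ)]) :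
          Finset ℤ) : Set ℤ) := by
    ext n
    simp [hq.ne']
  rw [hset, Set.ncard_coe_finset]
  have hq0 : (q : ℝ) ≠ 0 := by exact_mod_cast hq.ne'
  have htot : (q.totient : ℝ) / q = ∏ p ∈ q.primeFactors, (1 - (p : ℝ)⁻¹) := by
    have h := congrArg (fun x : ℚ => (x : ℝ)) (Nat.totient_eq_mul_prod_factors q)
    push_cast at h
    rw [h, mul_div_cancel_left₀ _ hq0]
  have hfac : ∀ p ∈ q.primeFactors, (1 / 2 : ℝ) ≤ 1 - (p : ℝ)⁻¹ := by
    intro p hp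
    have h2 : (2 : ℝ) ≤ p := by exact_mod_cast (Nat.prime_of_mem_primeFactors hp).two_le
    have := inv_anti₀ (by norm_num) h2
    linarith
  -- The product over `p > T` has at most one factor.
  have hlarge : (1 / 2 : ℝ) ≤
      ∏ p ∈ q.primeFactors.filter (fun p : ℕ => ¬ (p : ℝ) ≤ T), (1 - (p : ℝ)⁻¹) := by
    have hcard : (q.primeFactors.filter (fun p : ℕ => ¬ (p : ℝ) ≤ T)).card ≤ 1 := by
      refine Finset.card_le_one.2 fun p₁ h₁ p₂ h₂ => ?_
      simp only [Finset.mem_filter, Nat.mem_primeFactors, not_le] at h₁ h₂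
      exact hone p₁ p₂ h₁.1.1 h₂.1.1 h₁.1.2.1 h₂.1.2.1 h₁.2 h₂.2
    rcases Finset.card_le_one_iff_subset_singleton.1 hcard with ⟨r, hr⟩
    rcases Finset.subset_singleton_iff.1 hr with h | h
    · rw [h]; norm_num
    · rw [h, Finset.prod_singleton]
      have hmem : r ∈ q.primeFactors.filter (fun p : ℕ => ¬ (p : ℝ) ≤ T) :=
        h ▸ Finset.mem_singleton_self r
      exact hfac r (Finset.mem_filter.1 hmem).1
  have hsmall : (0 : ℝ) ≤
      ∏ p ∈ q.primeFactors.filter (fun p : ℕ => (p : ℝ) ≤ T), (1 - (p : ℝ)⁻¹) :=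
    Finset.prod_nonneg fun p hp =>
      le_trans (by norm_num) (hfac p (Finset.mem_filter.1 hp).1)
  rw [htot, ← Finset.prod_filter_mul_prod_filter_not q.primeFactors (fun p : ℕ => (p : ℝ) ≤ T)]
  refine ha.trans (mul_le_mul_of_nonneg_right ?_ (Nat.cast_nonneg _))
  nlinarith
end

section
/- Let u ≥ 2 be a real number and m a nonnegative integer. Suppose that for every prime p ≤ u there is a residue class a_p modulo p such that every integer n with 0 ≤ n ≤ m satisfies n ≡ a_p (mod p) for some prime p ≤ u. Then there exist infinitely many positive integers N such that every integer in the interval [N, N+m] has a prime factor p ≤ u; in particular, J(u) ≥ m + 1. -/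
lemma prime_dvd_floor_factorial {u : ℝ} {p : ℕ} (hp : p.Prime) (hpu : (p : ℝ) ≤ u) :
    p ∣ (⌊u⌋₊).factorial :=
  Nat.dvd_factorial hp.pos (Nat.le_floor hpu)

lemma exists_simultaneous_residue (u : ℝ) (a : ℕ → ℕ) :
    ∃ c : ℕ, ∀ p : ℕ, p.Prime → (p : ℝ) ≤ u → c ≡ a p [MOD p] := by
  let t : Finset ℕ := (Finset.range (⌊u⌋₊ + 1)).filter Nat.Prime
  have hmem : ∀ p, p ∈ t ↔ p < ⌊u⌋₊ + 1 ∧ p.Prime := by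
    intro p
    simp [t]
  obtain ⟨c, hc⟩ := Nat.chineseRemainderOfFinset a (fun p => p) t
    (fun p hp => ((hmem p).1 hp).2.ne_zero)
    (fun p hp q hq hpq =>
      (Nat.coprime_primes ((hmem p).1 hp).2 ((hmem q).1 hq).2).2 hpq)
  exact ⟨c, fun p hp hpu => hc p ((hmem p).2 ⟨Nat.lt_succ_of_le (Nat.le_floor hpu), hp⟩)⟩

lemma exists_covered_block (u : ℝ) (m : ℕ) (a : ℕ → ℕ)
    (hcover : ∀ n : ℕ, n ≤ m → ∃ p : ℕ, p.Prime ∧ (p : ℝ) ≤ u ∧ n % p = a p % p) (k : ℕ) :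
    ∃ N : ℕ, k < N ∧
      ∀ j : ℕ, N ≤ j → j ≤ N + m → ∃ p : ℕ, p.Prime ∧ (p : ℝ) ≤ u ∧ p ∣ j := by
  obtain ⟨c, hc⟩ := exists_simultaneous_residue u a
  have hF : 0 < (⌊u⌋₊).factorial := Nat.factorial_pos _
  have hle : c + k + 1 ≤ (⌊u⌋₊).factorial * (c + k + 1) := Nat.le_mul_of_pos_left _ hF
  obtain ⟨N, hN⟩ : ∃ N, (⌊u⌋₊).factorial * (c + k + 1) = N + c :=
    ⟨(⌊u⌋₊).factorial * (c + k + 1) - c, by omega⟩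
  refine ⟨N, by omega, fun j hj1 hj2 => ?_⟩
  obtain ⟨n, rfl⟩ := Nat.exists_eq_add_of_le hj1
  obtain ⟨p, hp, hpu, hn⟩ := hcover n (by omega)
  refine ⟨p, hp, hpu, ?_⟩
  have hdvd : p ∣ N + c := hN ▸ (prime_dvd_floor_factorial hp hpu).mul_right _
  have hnc : n ≡ c [MOD p] := Nat.ModEq.trans hn (hc p hp hpu).symm
  exact ((hnc.add_left N).dvd_iff dvd_rfl).2 hdvd

/-- Any covered block starting beyond `1` bounds `jacobsthal u` from below. -/
lemma succ_le_jacobsthal_of_block (u : ℝ) (m N : ℕ) (hN : 1 < N)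
    (hblock : ∀ j : ℕ, N ≤ j → j ≤ N + m → ∃ p : ℕ, p.Prime ∧ (p : ℝ) ≤ u ∧ p ∣ j) :
    m + 1 ≤ jacobsthal u := by
  classical
  let Free : ℕ → Prop := fun n => ∀ p : ℕ, p.Prime → (p : ℝ) ≤ u → ¬ p ∣ n
  have not_free : ∀ n, ¬ Free n → ∃ p : ℕ, p.Prime ∧ (p : ℝ) ≤ u ∧ p ∣ n := by
    intro n hn
    simpa [Free] using hn
  have hF : 0 < (⌊u⌋₊).factorial := Nat.factorial_pos _
  have free_one : Free 1 := fun p hp _ h => hp.one_lt.ne' (Nat.dvd_one.1 h)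
  have free_large : ∃ n, N ≤ n ∧ Free n := by
    refine ⟨(⌊u⌋₊).factorial * N + 1, ?_, fun p hp hpu h => ?_⟩
    · have := Nat.le_mul_of_pos_left N hF
      omega
    · exact free_one p hp hpu
        ((Nat.dvd_add_right ((prime_dvd_floor_factorial hp hpu).mul_right N)).1 h)
  let n := Nat.findGreatest Free (N - 1)
  have hn_free : Free n := Nat.findGreatest_spec (P := Free) (by omega : 1 ≤ N - 1) free_one
  have hn_pos : 1 ≤ n := Nat.le_findGreatest (by omega) free_one
  have hn_le : n ≤ N - 1 := Nat.findGreatest_le _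
  let n' := Nat.find free_large
  obtain ⟨hn'_le, hn'_free⟩ : N ≤ n' ∧ Free n' := Nat.find_spec free_large
  have hn'_gt : N + m < n' := by
    by_contra! h
    obtain ⟨p, hp, hpu, hd⟩ := hblock n' hn'_le h
    exact hn'_free p hp hpu hd
  have hmem : n' - n ≤ jacobsthal u := by
    refine le_csSup ⟨(⌊u⌋₊).factorial, ?_⟩
      ⟨n, n', hn_pos, by omega, hn_free, hn'_free, fun j hj1 hj2 => not_free j fun hj => ?_, rfl⟩
    · rintro d ⟨x, y, -, -, hx, -, hgap, rfl⟩
      by_contra! h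
      -- `x + F` lies strictly inside the gap, although it is as free as `x` itself.
      obtain ⟨p, hp, hpu, hd⟩ := hgap (x + (⌊u⌋₊).factorial) (by omega) (by omega)
      exact hx p hp hpu ((Nat.dvd_add_left (prime_dvd_floor_factorial hp hpu)).1 hd)
    · rcases lt_or_ge j N with hjN | hjN
      · exact Nat.findGreatest_is_greatest hj1 (by omega) hj
      · exact Nat.find_min free_large hj2 ⟨hjN, hj⟩
  omega

/-- If residue classes `a_p mod p`, one for each prime `p ≤ u`, cover all of
`[0, m]`, then there are infinitely many positive integers `N` such that every
integer in `[N, N + m]` has a prime factor `p ≤ u`; in particular `J(u) ≥ m + 1`. -/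
theorem covering_implies_jacobsthal (u : ℝ) (hu : 2 ≤ u) (m : ℕ) (a : ℕ → ℕ)
    (hcover : ∀ n : ℕ, n ≤ m → ∃ p : ℕ, p.Prime ∧ (p : ℝ) ≤ u ∧ n % p = a p % p) :
    (∀ k : ℕ, ∃ N : ℕ, k ≤ N ∧ 0 < N ∧
      ∀ j : ℕ, N ≤ j → j ≤ N + m → ∃ p : ℕ, p.Prime ∧ (p : ℝ) ≤ u ∧ p ∣ j) ∧
    m + 1 ≤ jacobsthal u := by
  refine ⟨fun k => ?_, ?_⟩
  · obtain ⟨N, hN, hblock⟩ := exists_covered_block u m a hcover k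
    exact ⟨N, hN.le, by omega, hblock⟩
  · obtain ⟨N, hN, hblock⟩ := exists_covered_block u m a hcover 1
    exact succ_le_jacobsthal_of_block u m N hN hblock
end
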